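/- arXiv:1901.10845 — 3 statements merged into one kernel-verified Lean document; each statement's English description precedes it below -/
import Mathlib

section
/- Let N ≥ 2, 0 < s < 1 and 1 ≤ q < 2*_s := 2N/(N−2s). Let Ω ⊆ ℝ^N be an open bounded set with A(Ω) > 0, let u be a first minimizer for λ_{s,q}(Ω), set λ = λ_{s,q}(Ω), U(x,z) = (P_z ∗ u)(x), and let T = sup { t > 0 : |{u > t}| ≥ |Ω|(1 − A(Ω)/9) }. Then for every t with T/4 ≤ t ≤ (3/8)T and every z with 0 < z ≤ ((√(A(Ω)·|Ω|)/(24·√(β_{N,s} λ)))·T)^{1/s}, writing E_{t,z} = {x ∈ ℝ^N : U(x,z) > t}, one has | |E_{t,z}| − |Ω| | ≤ (1/3)|Ω| A(Ω) and A(E_{t,z}) ≥ (1/5) A(Ω). -/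
open MeasureTheory Filter
open scoped ENNReal NNReal Topology FourierTransform RealInnerProductSpace

noncomputable section

/-- Euclidean space ℝ^N -/
abbrev Eu (N : ℕ) := EuclideanSpace ℝ (Fin N)

/-- Squared Gagliardo seminorm `[u]_{W^{s,2}}²`, as an extended nonnegative real. -/
def gagliardoSq (N : ℕ) (s : ℝ) (u : Eu N → ℝ) : ℝ≥0∞ :=
  ∫⁻ x, ∫⁻ y, ENNReal.ofReal (|u x - u y| ^ 2 / ‖x - y‖ ^ ((N : ℝ) + 2 * s))

/-- Squared Gagliardo seminorm, as a real number. -/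
def gagliardoSqR (N : ℕ) (s : ℝ) (u : Eu N → ℝ) : ℝ :=
  (gagliardoSq N s u).toReal

/-- The sharp fractional Poincaré–Sobolev constant
`λ_{s,q}(Ω) = inf { [u]_{W^{s,2}}² : u ∈ C_c^∞(Ω), ‖u‖_{L^q(Ω)} = 1 }`. -/
def sobolevConst (N : ℕ) (s q : ℝ) (Ω : Set (Eu N)) : ℝ :=
  sInf { c : ℝ | ∃ u : Eu N → ℝ, ContDiff ℝ (⊤ : ℕ∞) u ∧ HasCompactSupport u ∧
    tsupport u ⊆ Ω ∧ (∫ x in Ω, |u x| ^ q) = 1 ∧ c = gagliardoSqR N s u }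

/-- The Fraenkel asymmetry `A(Ω)`. -/
def asym (N : ℕ) (Ω : Set (Eu N)) : ℝ :=
  sInf { c : ℝ | ∃ (x₀ : Eu N) (r : ℝ), 0 < r ∧
    volume (Metric.ball x₀ r) = volume Ω ∧
    c = (volume (symmDiff Ω (Metric.ball x₀ r))).toReal / (volume Ω).toReal }

/-- The normalizing constant `β_{N,s}`. -/
def betaC (N : ℕ) (s : ℝ) : ℝ :=
  (∫ x : Eu N, ((1 : ℝ) + ‖x‖ ^ 2) ^ (-((N : ℝ) + 2 * s) / 2))⁻¹

/-- The Poisson kernel `P_z(x) = β_{N,s} z^{2s} (z² + |x|²)^{-(N+2s)/2}`. -/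
def poisson (N : ℕ) (s z : ℝ) (x : Eu N) : ℝ :=
  betaC N s * z ^ (2 * s) * ((z ^ 2 + ‖x‖ ^ 2) ^ (-((N : ℝ) + 2 * s) / 2))

/-- The Caffarelli–Silvestre extension `U(x,z) = (P_z ∗ u)(x)`. -/
def csExt (N : ℕ) (s : ℝ) (u : Eu N → ℝ) (x : Eu N) (z : ℝ) : ℝ :=
  ∫ y, poisson N s z (x - y) * u y

/-- A first minimizer for `λ_{s,q}(Ω)`: a nonnegative measurable function, vanishing a.e.
outside `Ω`, with unit `L^q` norm, realizing the infimum, and positive inside `Ω`. -/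
def IsFirstMinimizer (N : ℕ) (s q : ℝ) (Ω : Set (Eu N)) (u : Eu N → ℝ) : Prop :=
  Measurable u ∧ (∀ x, 0 ≤ u x) ∧ (∀ᵐ x, x ∉ Ω → u x = 0) ∧
  (∫ x in Ω, u x ^ q) = 1 ∧ gagliardoSqR N s u = sobolevConst N s q Ω ∧
  ∀ x ∈ Ω, 0 < u x

/-- The level `T` from (4.1): `T = sup { t > 0 : |{u > t}| ≥ |Ω| (1 - A(Ω)/9) }`. -/
def levelT (N : ℕ) (Ω : Set (Eu N)) (u : Eu N → ℝ) : ℝ :=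
  sSup { t : ℝ | 0 < t ∧
    volume Ω * ENNReal.ofReal (1 - asym N Ω / 9) ≤ volume {x | t < u x} }


theorem exists_volume_ball_eq {N : ℕ} (hN : N ≠ 0) (x₀ : Eu N) {V : ℝ≥0∞} (hV0 : V ≠ 0)
    (hV : V ≠ ∞) : ∃ r : ℝ, 0 < r ∧ volume (Metric.ball x₀ r) = V := by
  have hc0 : volume (Metric.ball (0 : Eu N) 1) ≠ 0 :=
    (Metric.measure_ball_pos volume _ one_pos).ne'
  have hc : volume (Metric.ball (0 : Eu N) 1) ≠ ∞ := measure_ball_lt_top.ne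
  have hq0 : V / volume (Metric.ball (0 : Eu N) 1) ≠ 0 := ENNReal.div_ne_zero.2 ⟨hV0, hc⟩
  have hq : V / volume (Metric.ball (0 : Eu N) 1) ≠ ∞ := ENNReal.div_ne_top hV hc0
  have hpos := ENNReal.toReal_pos hq0 hq
  refine ⟨(V / volume (Metric.ball (0 : Eu N) 1)).toReal ^ ((N : ℝ)⁻¹),
    Real.rpow_pos_of_pos hpos _, ?_⟩
  rw [Measure.addHaar_ball_of_pos _ _ (Real.rpow_pos_of_pos hpos _), finrank_euclideanSpace_fin,
    Real.rpow_inv_natCast_pow hpos.le hN, ENNReal.ofReal_toReal hq,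
    ENNReal.div_mul_cancel hc0 hc]

theorem asym_le {N : ℕ} {Ω : Set (Eu N)} {x₀ : Eu N} {r : ℝ} (hr : 0 < r)
    (hB : volume (Metric.ball x₀ r) = volume Ω) :
    asym N Ω ≤ volume.real (symmDiff Ω (Metric.ball x₀ r)) / volume.real Ω :=
  csInf_le ⟨0, by rintro c ⟨_, _, _, _, rfl⟩; positivity⟩ ⟨x₀, r, hr, hB, rfl⟩

theorem real_symmDiff_le_add {α : Type*} [MeasurableSpace α] (μ : Measure α) {S R : Set α}
    (hS : μ S ≠ ∞) (hR : μ R ≠ ∞) : μ.real (symmDiff S R) ≤ μ.real S + μ.real R :=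
  (measureReal_mono (Set.symmDiff_subset_union)
    (measure_union_lt_top hS.lt_top hR.lt_top).ne).trans (measureReal_union_le _ _)

theorem asym_le_two {N : ℕ} (hN : N ≠ 0) {Ω : Set (Eu N)} (h0 : volume Ω ≠ 0)
    (h : volume Ω ≠ ∞) : asym N Ω ≤ 2 := by
  obtain ⟨r, hr, hB⟩ := exists_volume_ball_eq hN (0 : Eu N) h0 h
  refine (asym_le hr hB).trans ?_
  have hpos : 0 < volume.real Ω := ENNReal.toReal_pos h0 h
  rw [div_le_iff₀ hpos]
  have := real_symmDiff_le_add volume h (hB ▸ h)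
  have hB' : volume.real (Metric.ball (0 : Eu N) r) = volume.real Ω := by
    simp only [Measure.real, hB]
  linarith

theorem real_symmDiff_ball_concentric {N : ℕ} (x₀ : Eu N) (r r' : ℝ) :
    volume.real (symmDiff (Metric.ball x₀ r) (Metric.ball x₀ r')) =
      |volume.real (Metric.ball x₀ r) - volume.real (Metric.ball x₀ r')| := by
  wlog h : r ≤ r' generalizing r r'
  · rw [symmDiff_comm, abs_sub_comm]
    exact this r' r (le_of_not_ge h)
  have hsub := Metric.ball_subset_ball (x := x₀) h
  rw [symmDiff_of_le hsub, measureReal_sdiff hsub measurableSet_ball, abs_sub_comm, abs_of_nonneg]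
  exact sub_nonneg.2 (measureReal_mono hsub measure_ball_lt_top.ne)

theorem abs_real_sub_le_real_symmDiff {α : Type*} [MeasurableSpace α] (μ : Measure α)
    {S R : Set α} (hS : μ S ≠ ∞) (hR : μ R ≠ ∞) :
    |μ.real S - μ.real R| ≤ μ.real (symmDiff S R) := by
  have hf : μ (symmDiff S R) ≠ ∞ :=
    ((measure_mono Set.symmDiff_subset_union).trans_lt
      (measure_union_lt_top hS.lt_top hR.lt_top)).ne
  have h1 : μ.real S ≤ μ.real R + μ.real (symmDiff S R) :=
    (measureReal_mono (fun x hx => by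
      by_cases h : x ∈ R
      · exact Or.inl h
      · exact Or.inr (Or.inl ⟨hx, h⟩)) (measure_union_lt_top hR.lt_top hf.lt_top).ne).trans
      (measureReal_union_le _ _)
  have h2 : μ.real R ≤ μ.real S + μ.real (symmDiff S R) :=
    (measureReal_mono (fun x hx => by
      by_cases h : x ∈ S
      · exact Or.inl h
      · exact Or.inr (Or.inr ⟨hx, h⟩)) (measure_union_lt_top hS.lt_top hf.lt_top).ne).trans
      (measureReal_union_le _ _)
  rw [abs_le]
  constructor <;> linarith

/-- Stability of the Fraenkel asymmetry under perturbations small in symmetric difference. -/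
theorem asym_mul_le_of_symmDiff {N : ℕ} (hN : N ≠ 0) {Ω E : Set (Eu N)}
    (hΩ0 : volume Ω ≠ 0) (hΩ : volume Ω ≠ ∞) (hE0 : volume E ≠ 0) (hE : volume E ≠ ∞) :
    asym N Ω * volume.real Ω - 2 * volume.real (symmDiff Ω E) ≤ asym N E * volume.real E := by
  have hEpos : 0 < volume.real E := ENNReal.toReal_pos hE0 hE
  have hΩpos : 0 < volume.real Ω := ENNReal.toReal_pos hΩ0 hΩ
  rw [← div_le_iff₀ hEpos]
  obtain ⟨r₀, hr₀, hB₀⟩ := exists_volume_ball_eq hN (0 : Eu N) hE0 hE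
  refine le_csInf ⟨_, 0, r₀, hr₀, hB₀, rfl⟩ ?_
  rintro c ⟨x₀, r, hr, hB, rfl⟩
  obtain ⟨r', hr', hB'⟩ := exists_volume_ball_eq hN x₀ hΩ0 hΩ
  change _ ≤ volume.real _ / volume.real E
  gcongr
  have h1 := asym_le hr' hB'
  rw [le_div_iff₀ hΩpos] at h1
  have h2 := real_symmDiff_ball_concentric x₀ r r'
  have e1 : volume.real (Metric.ball x₀ r) = volume.real E := by simp only [Measure.real, hB]
  have e2 : volume.real (Metric.ball x₀ r') = volume.real Ω := by simp only [Measure.real, hB']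
  rw [e1, e2, abs_sub_comm] at h2
  have h3 := abs_real_sub_le_real_symmDiff volume hΩ hE
  have fin : ∀ {S R : Set (Eu N)}, volume S ≠ ∞ → volume R ≠ ∞ → volume (symmDiff S R) ≠ ∞ :=
    fun hS hR => ((measure_mono Set.symmDiff_subset_union).trans_lt
      (measure_union_lt_top hS.lt_top hR.lt_top)).ne
  have tri : ∀ {S R Q : Set (Eu N)}, volume S ≠ ∞ → volume R ≠ ∞ → volume Q ≠ ∞ →
      volume.real (symmDiff S Q) ≤ volume.real (symmDiff S R) + volume.real (symmDiff R Q) :=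
    fun {S R Q} hS hR hQ => (measureReal_mono (symmDiff_triangle S R Q)
      (measure_union_lt_top (fin hS hR).lt_top (fin hR hQ).lt_top).ne).trans
      (measureReal_union_le _ _)
  have h4 := tri hΩ hE (hB' ▸ hΩ : volume (Metric.ball x₀ r') ≠ ∞)
  have h5 := tri hE (hB ▸ hE : volume (Metric.ball x₀ r) ≠ ∞)
    (hB' ▸ hΩ : volume (Metric.ball x₀ r') ≠ ∞)
  linarith

theorem betaC_nonneg (N : ℕ) (s : ℝ) : 0 ≤ betaC N s :=
  inv_nonneg.2 (integral_nonneg fun _ => by positivity)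

theorem poisson_nonneg (N : ℕ) (s : ℝ) {z : ℝ} (hz : 0 < z) (x : Eu N) : 0 ≤ poisson N s z x := by
  have := betaC_nonneg N s
  unfold poisson
  positivity

theorem poisson_eq_scaled {N : ℕ} (s : ℝ) {z : ℝ} (hz : 0 < z) (x : Eu N) :
    poisson N s z x = betaC N s * (z ^ N)⁻¹ *
      ((1 : ℝ) + ‖z⁻¹ • x‖ ^ 2) ^ (-((N : ℝ) + 2 * s) / 2) := by
  have h1 : z ^ 2 + ‖x‖ ^ 2 = z ^ 2 * (1 + ‖z⁻¹ • x‖ ^ 2) := by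
    rw [norm_smul, norm_inv, Real.norm_of_nonneg hz.le]
    field_simp
  have h2 : z ^ (2 * s) * (z ^ 2) ^ (-((N : ℝ) + 2 * s) / 2) = (z ^ N)⁻¹ := by
    rw [← Real.rpow_natCast z 2, ← Real.rpow_mul hz.le, ← Real.rpow_add hz,
      ← Real.rpow_natCast z N, ← Real.rpow_neg hz.le]
    congr 1
    push_cast
    ring
  unfold poisson
  rw [h1, Real.mul_rpow (by positivity) (by positivity), ← h2]
  ring

theorem integrable_poisson {N : ℕ} {s : ℝ} (hβ : betaC N s ≠ 0) {z : ℝ} (hz : 0 < z) :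
    Integrable (poisson N s z) := by
  have hI : Integrable
      (fun x : Eu N => ((1 : ℝ) + ‖x‖ ^ 2) ^ (-((N : ℝ) + 2 * s) / 2)) := by
    by_contra h
    exact hβ (by rw [betaC, integral_undef h, inv_zero])
  rw [show poisson N s z = _ from funext fun x => poisson_eq_scaled s hz x]
  exact (hI.comp_smul (inv_ne_zero hz.ne')).const_mul _

theorem integral_poisson {N : ℕ} {s : ℝ} (hβ : betaC N s ≠ 0) {z : ℝ} (hz : 0 < z) :
    ∫ x, poisson N s z x = 1 := by
  rw [show poisson N s z = _ from funext fun x => poisson_eq_scaled s hz x,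
    integral_const_mul,
    Measure.integral_comp_inv_smul_of_nonneg volume
      (fun x : Eu N => ((1 : ℝ) + ‖x‖ ^ 2) ^ (-((N : ℝ) + 2 * s) / 2)) hz.le,
    finrank_euclideanSpace_fin, smul_eq_mul]
  have hzN : z ^ N ≠ 0 := (pow_pos hz N).ne'
  unfold betaC at hβ ⊢
  rw [mul_assoc, inv_mul_cancel_left₀ hzN, inv_mul_cancel₀ (fun h => hβ (by rw [h, inv_zero]))]

theorem poisson_le_const {N : ℕ} {s : ℝ} (hs : 0 ≤ s) {z : ℝ} (hz : 0 < z) (x : Eu N) :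
    poisson N s z x ≤ betaC N s * z ^ (2 * s) * (z ^ 2) ^ (-((N : ℝ) + 2 * s) / 2) := by
  have := betaC_nonneg N s
  refine mul_le_mul_of_nonneg_left (Real.rpow_le_rpow_of_nonpos (by positivity) ?_ ?_)
    (by positivity)
  · nlinarith [sq_nonneg ‖x‖]
  · have : 0 ≤ (N : ℝ) := N.cast_nonneg
    linarith

theorem poisson_le_mul_norm_rpow {N : ℕ} {s : ℝ} (hs : 0 ≤ s) {z : ℝ} (hz : 0 < z) {x : Eu N}
    (hx : x ≠ 0) :
    poisson N s z x ≤ betaC N s * z ^ (2 * s) * (‖x‖ ^ ((N : ℝ) + 2 * s))⁻¹ := by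
  have := betaC_nonneg N s
  have hx' : 0 < ‖x‖ := norm_pos_iff.2 hx
  have h : (‖x‖ ^ ((N : ℝ) + 2 * s))⁻¹ = (‖x‖ ^ 2) ^ (-((N : ℝ) + 2 * s) / 2) := by
    rw [← Real.rpow_natCast ‖x‖ 2, ← Real.rpow_mul hx'.le, ← Real.rpow_neg hx'.le]
    congr 1
    push_cast
    ring
  rw [h]
  refine mul_le_mul_of_nonneg_left (Real.rpow_le_rpow_of_nonpos (by positivity) ?_ ?_)
    (by positivity)
  · nlinarith [sq_nonneg z]
  · have : 0 ≤ (N : ℝ) := N.cast_nonneg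
    linarith

theorem csExt_sub_eq {N : ℕ} {s : ℝ} (hs : 0 ≤ s) (hβ : betaC N s ≠ 0) {z : ℝ} (hz : 0 < z)
    {u : Eu N → ℝ} (hu : Integrable u) (x : Eu N) :
    csExt N s u x z - u x = ∫ y, poisson N s z (x - y) * (u y - u x) := by
  have hP : Integrable (fun y => poisson N s z (x - y)) :=
    (integrable_poisson hβ hz).comp_sub_left x
  have h1 : Integrable (fun y => poisson N s z (x - y) * u y) :=
    hu.bdd_mul hP.aestronglyMeasurable (ae_of_all _ fun y => by
      rw [Real.norm_of_nonneg (poisson_nonneg N s hz _)]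
      exact poisson_le_const hs hz (x - y))
  simp_rw [mul_sub]
  rw [integral_sub h1 (hP.mul_const _), integral_mul_const,
    integral_sub_left_eq_self (poisson N s z) volume x, integral_poisson hβ hz, one_mul]
  rfl

/-- Jensen's inequality for the Poisson kernel, pointwise in `x`. -/
theorem enorm_csExt_sub_sq_le {N : ℕ} {s : ℝ} (hs : 0 ≤ s) (hβ : betaC N s ≠ 0) {z : ℝ}
    (hz : 0 < z) {u : Eu N → ℝ} (hum : Measurable u) (hu : Integrable u) (x : Eu N) :
    ‖csExt N s u x z - u x‖ₑ ^ 2 ≤ ENNReal.ofReal (betaC N s * z ^ (2 * s)) *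
      ∫⁻ y, ENNReal.ofReal (|u x - u y| ^ 2 / ‖x - y‖ ^ ((N : ℝ) + 2 * s)) := by
  set P : Eu N → ℝ≥0∞ := fun y => ENNReal.ofReal (poisson N s z (x - y))
  have hPi : Integrable (fun y => poisson N s z (x - y)) :=
    (integrable_poisson hβ hz).comp_sub_left x
  have hPm : AEMeasurable P := hPi.aemeasurable.ennreal_ofReal
  have hP1 : ∫⁻ y, P y = 1 := by
    rw [← ofReal_integral_eq_lintegral_ofReal hPi (ae_of_all _ fun y => poisson_nonneg N s hz _),
      integral_sub_left_eq_self (poisson N s z) volume x, integral_poisson hβ hz,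
      ENNReal.ofReal_one]
  have hfm : Measurable fun y => ‖u y - u x‖ₑ := (hum.sub_const _).enorm
  have hsq : ∀ a : ℝ≥0∞, (a ^ (1 / 2 : ℝ)) ^ (2 : ℝ) = a := fun a => by
    rw [← ENNReal.rpow_mul]; norm_num
  have h1 : ‖csExt N s u x z - u x‖ₑ ≤
      ∫⁻ y, P y ^ (1 / 2 : ℝ) * (P y ^ (1 / 2 : ℝ) * ‖u y - u x‖ₑ) := by
    rw [csExt_sub_eq hs hβ hz hu x]
    refine (enorm_integral_le_lintegral_enorm _).trans (lintegral_mono fun y => ?_)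
    rw [enorm_mul, Real.enorm_of_nonneg (poisson_nonneg N s hz _), ← mul_assoc,
      ← ENNReal.rpow_add_of_nonneg _ _ (by norm_num) (by norm_num)]
    norm_num [P]
  have h2 := ENNReal.lintegral_mul_le_Lp_mul_Lq volume Real.HolderConjugate.two_two
    (hPm.pow_const (1 / 2 : ℝ)) ((hPm.pow_const (1 / 2 : ℝ)).mul hfm.aemeasurable)
  simp only [Pi.mul_apply, hsq, hP1, ENNReal.one_rpow, one_mul] at h2
  have h3 : ‖csExt N s u x z - u x‖ₑ ^ 2 ≤ ∫⁻ y, P y * ‖u y - u x‖ₑ ^ 2 := by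
    have := ENNReal.rpow_le_rpow (h1.trans h2) (zero_le_two (α := ℝ))
    rw [hsq] at this
    simpa only [ENNReal.mul_rpow_of_nonneg _ _ (zero_le_two (α := ℝ)), hsq, ENNReal.rpow_two]
      using this
  refine h3.trans ?_
  rw [← lintegral_const_mul' _ _ ENNReal.ofReal_ne_top]
  refine lintegral_mono fun y => ?_
  have hb := betaC_nonneg N s
  rw [← ENNReal.ofReal_mul (by positivity), Real.enorm_eq_ofReal_abs,
    ← ENNReal.ofReal_pow (abs_nonneg _), ← ENNReal.ofReal_mul (poisson_nonneg N s hz _)]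
  refine ENNReal.ofReal_le_ofReal ?_
  rcases eq_or_ne x y with rfl | hxy
  · simp
  · rw [abs_sub_comm (u y), div_eq_mul_inv, mul_comm (|u x - u y| ^ 2), ← mul_assoc]
    exact mul_le_mul_of_nonneg_right (poisson_le_mul_norm_rpow hs hz (sub_ne_zero.2 hxy))
      (by positivity)

/-- Chebyshev's inequality for `U(·,z) - u`. -/
theorem sq_mul_volume_le_gagliardoSq {N : ℕ} {s : ℝ} (hs : 0 ≤ s) (hβ : betaC N s ≠ 0) {z : ℝ}
    (hz : 0 < z) {u : Eu N → ℝ} (hum : Measurable u) (hu : Integrable u) {δ : ℝ} (hδ : 0 ≤ δ)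
    {S : Set (Eu N)} (hS : ∀ᵐ x, x ∈ S → δ ≤ |csExt N s u x z - u x|) :
    ENNReal.ofReal (δ ^ 2) * volume S ≤
      ENNReal.ofReal (betaC N s * z ^ (2 * s)) * gagliardoSq N s u := by
  set g : Eu N → ℝ≥0∞ := fun x =>
    ∫⁻ y, ENNReal.ofReal (|u x - u y| ^ 2 / ‖x - y‖ ^ ((N : ℝ) + 2 * s))
  have hg : Measurable g := by
    refine Measurable.lintegral_prod_right' (f := fun p : Eu N × Eu N =>
      ENNReal.ofReal (|u p.1 - u p.2| ^ 2 / ‖p.1 - p.2‖ ^ ((N : ℝ) + 2 * s))) ?_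
    have h1 : Measurable fun p : Eu N × Eu N => u p.1 - u p.2 :=
      (hum.comp measurable_fst).sub (hum.comp measurable_snd)
    have h2 : Measurable fun p : Eu N × Eu N => p.1 - p.2 := measurable_fst.sub measurable_snd
    simp only [sq_abs]
    exact ((h1.pow_const 2).div (h2.norm.pow_const _)).ennreal_ofReal
  have h1 : volume S ≤ volume {x | ENNReal.ofReal (δ ^ 2) ≤
      ENNReal.ofReal (betaC N s * z ^ (2 * s)) * g x} := by
    refine measure_mono_ae ?_
    filter_upwards [hS] with x hx hxS
    refine le_trans ?_ (enorm_csExt_sub_sq_le hs hβ hz hum hu x)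
    rw [Real.enorm_eq_ofReal_abs, ENNReal.ofReal_pow hδ]
    gcongr
    exact hx hxS
  calc _ ≤ _ := mul_le_mul_right h1 _
    _ ≤ _ := mul_meas_ge_le_lintegral (hg.const_mul _) _
    _ = _ := lintegral_const_mul _ hg

theorem integrable_of_integral_rpow_ne_zero {α : Type*} [MeasurableSpace α] {μ : Measure α}
    {q : ℝ} (hq : 1 ≤ q) {Ω : Set α} (hΩ : μ Ω ≠ ∞) {u : α → ℝ}
    (hum : Measurable u) (hu0 : ∀ x, 0 ≤ u x) (hout : ∀ᵐ x ∂μ, x ∉ Ω → u x = 0)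
    (hint : ∫ x in Ω, u x ^ q ∂μ ≠ 0) : Integrable u μ := by
  have hI : IntegrableOn (fun x => u x ^ q) Ω μ := by
    by_contra h
    exact hint (integral_undef h)
  have hc : IntegrableOn (fun _ => (1 : ℝ)) Ω μ := integrableOn_const hΩ
  have hon : IntegrableOn u Ω μ := by
    refine (hI.add hc).mono' hum.aestronglyMeasurable (ae_of_all _ fun x => ?_)
    rw [Real.norm_of_nonneg (hu0 x)]
    change u x ≤ u x ^ q + 1
    rcases le_total (u x) 1 with h | h
    · exact h.trans (le_add_of_nonneg_left (Real.rpow_nonneg (hu0 x) q))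
    · exact (Real.self_le_rpow_of_one_le h hq).trans (by linarith)
  exact hon.integrable_of_ae_notMem_eq_zero hout

/-- **Proposition 4.4**: for `T/4 ≤ t ≤ (3/8)T` and
`0 < z ≤ ((√(A(Ω)|Ω|)/(24√(β_{N,s} λ))) T)^{1/s}`, the level set
`E_{t,z} = {U(·,z) > t}` of the extension satisfies `||E_{t,z}| - |Ω|| ≤ |Ω| A(Ω)/3`
and `A(E_{t,z}) ≥ A(Ω)/5`. -/
theorem asymmetry_of_extension_level_sets
    (N : ℕ) (hN : 2 ≤ N) (s q : ℝ) (hs0 : 0 < s) (hs1 : s < 1)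
    (hq1 : 1 ≤ q) (hq2 : q < 2 * N / ((N : ℝ) - 2 * s))
    (Ω : Set (Eu N)) (hΩo : IsOpen Ω) (hΩb : Bornology.IsBounded Ω)
    (hA : 0 < asym N Ω)
    (u : Eu N → ℝ) (hu : IsFirstMinimizer N s q Ω u)
    (t : ℝ) (ht1 : levelT N Ω u / 4 ≤ t) (ht2 : t ≤ 3 / 8 * levelT N Ω u)
    (z : ℝ) (hz0 : 0 < z)
    (hz1 : z ≤ (Real.sqrt (asym N Ω * (volume Ω).toReal)
        / (24 * Real.sqrt (betaC N s * sobolevConst N s q Ω))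
        * levelT N Ω u) ^ (1 / s)) :
    |(volume {x | t < csExt N s u x z}).toReal - (volume Ω).toReal|
        ≤ 1 / 3 * (volume Ω).toReal * asym N Ω ∧
    asym N {x | t < csExt N s u x z} ≥ 1 / 5 * asym N Ω := by
  obtain ⟨hum, hu0, hout, hint, hgag, -⟩ := hu
  have hN0 : N ≠ 0 := by omega
  set T := levelT N Ω u with hT
  set A := asym N Ω with hAdef
  set lam := sobolevConst N s q Ω
  set β := betaC N s with hβdef
  set K := Real.sqrt (A * (volume Ω).toReal) / (24 * Real.sqrt (β * lam)) * T with hK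
  have hT0 : 0 ≤ T := Real.sSup_nonneg fun x hx => hx.1.le
  have hK0 : 0 ≤ K := by positivity
  have hKne : K ≠ 0 := fun h => by
    rw [h, Real.zero_rpow (by positivity)] at hz1
    linarith
  have hTne : T ≠ 0 := fun h => hKne (by rw [hK, h, mul_zero])
  have hTpos : 0 < T := lt_of_le_of_ne hT0 hTne.symm
  have hVne : (volume Ω).toReal ≠ 0 := fun h => hKne (by rw [hK, h]; simp)
  have hrne : Real.sqrt (β * lam) ≠ 0 := fun h => hKne (by rw [hK, h]; simp)
  have hbl : 0 < β * lam := Real.sqrt_pos.1 (lt_of_le_of_ne (Real.sqrt_nonneg _) hrne.symm)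
  have hβne : β ≠ 0 := left_ne_zero_of_mul hbl.ne'
  have hlne : lam ≠ 0 := right_ne_zero_of_mul hbl.ne'
  have hΩ0 : volume Ω ≠ 0 := (ENNReal.toReal_ne_zero.1 hVne).1
  have hΩf : volume Ω ≠ ∞ := (ENNReal.toReal_ne_zero.1 hVne).2
  have hgf : gagliardoSq N s u ≠ ∞ := (ENNReal.toReal_ne_zero.1 (hgag.trans_ne hlne)).2
  have hui : Integrable u := integrable_of_integral_rpow_ne_zero hq1 hΩf hum hu0
    hout (by rw [hint]; exact one_ne_zero)
  set V := (volume Ω).toReal with hV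
  have hVpos : 0 < V := lt_of_le_of_ne ENNReal.toReal_nonneg hVne.symm
  have hA2 : A ≤ 2 := asym_le_two hN0 hΩ0 hΩf
  have hzs : β * z ^ (2 * s) * lam ≤ A * V * T ^ 2 / 576 := by
    have h1 : z ^ s ≤ K := by
      have := Real.rpow_le_rpow hz0.le hz1 hs0.le
      rwa [← Real.rpow_mul hK0, one_div_mul_cancel hs0.ne', Real.rpow_one] at this
    have h2 : z ^ (2 * s) = (z ^ s) ^ 2 := by
      rw [← Real.rpow_natCast, ← Real.rpow_mul hz0.le]
      congr 1
      push_cast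
      ring
    have h3 : (z ^ s) ^ 2 ≤ K ^ 2 := by gcongr
    have h4 : K ^ 2 * (β * lam) = A * V * T ^ 2 / 576 := by
      rw [hK, mul_pow, div_pow, mul_pow, Real.sq_sqrt (by positivity), Real.sq_sqrt hbl.le]
      field_simp
      norm_num
    rw [h2, ← h4]
    calc β * (z ^ s) ^ 2 * lam = (z ^ s) ^ 2 * (β * lam) := by ring
      _ ≤ _ := mul_le_mul_of_nonneg_right h3 hbl.le
  set E := {x | t < csExt N s u x z} with hE
  have cheb : ∀ {δ : ℝ} {S : Set (Eu N)}, 0 < δ →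
      (∀ᵐ x, x ∈ S → δ ≤ |csExt N s u x z - u x|) →
      volume S ≠ ∞ ∧ δ ^ 2 * volume.real S ≤ A * V * T ^ 2 / 576 := by
    intro δ S hδ hS
    have h := sq_mul_volume_le_gagliardoSq hs0.le hβne hz0 hum hui hδ.le hS
    have hfin := ENNReal.mul_ne_top (ENNReal.ofReal_ne_top (r := β * z ^ (2 * s))) hgf
    refine ⟨fun htop => ?_, ?_⟩
    · rw [htop, ENNReal.mul_top (ENNReal.ofReal_pos.2 (by positivity)).ne'] at h
      exact hfin (top_le_iff.1 h)
    · have h' := ENNReal.toReal_mono hfin h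
      have hb := betaC_nonneg N s
      rw [ENNReal.toReal_mul, ENNReal.toReal_mul, ENNReal.toReal_ofReal (by positivity),
        ENNReal.toReal_ofReal (by positivity)] at h'
      exact h'.trans ((mul_le_mul_of_nonneg_left (le_of_eq hgag) (by positivity)).trans hzs)
  have hlevel : (1 - A / 9) * V ≤ volume.real {x | 7 / 8 * T < u x} ∧
      volume {x | 7 / 8 * T < u x} ≤ volume ({x | 7 / 8 * T < u x} ∩ Ω) := by
    have hsub : volume {x | 7 / 8 * T < u x} ≤ volume ({x | 7 / 8 * T < u x} ∩ Ω) := by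
      refine measure_mono_ae ?_
      filter_upwards [hout] with x hx hxu
      refine ⟨hxu, by_contra fun h => ?_⟩
      have hxu' : 7 / 8 * T < u x := hxu
      rw [hx h] at hxu'
      linarith
    refine ⟨?_, hsub⟩
    have hlt : 7 / 8 * T < T := by linarith
    have hne : {t : ℝ | 0 < t ∧
        volume Ω * ENNReal.ofReal (1 - asym N Ω / 9) ≤ volume {x | t < u x}}.Nonempty := by
      by_contra h
      rw [Set.not_nonempty_iff_eq_empty] at h
      exact hTne (by rw [hT, levelT, h, Real.sSup_empty])
    obtain ⟨τ, ⟨-, hτ⟩, hτT⟩ := exists_lt_of_lt_csSup hne hlt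
    have h1 : volume Ω * ENNReal.ofReal (1 - A / 9) ≤ volume {x | 7 / 8 * T < u x} :=
      hτ.trans (measure_mono fun x hx => hτT.trans hx)
    have h2 := ENNReal.toReal_mono
      (hsub.trans_lt ((measure_mono Set.inter_subset_right).trans_lt hΩf.lt_top)).ne h1
    rw [ENNReal.toReal_mul, ENNReal.toReal_ofReal (by linarith), mul_comm] at h2
    exact h2
  set F := {x | 7 / 8 * T < u x} with hF
  have hFm : MeasurableSet F := measurableSet_lt measurable_const hum
  obtain ⟨-, hFE⟩ := cheb (δ := T / 2) (S := F \ E) (by linarith) (ae_of_all _ fun x hx => by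
    have h1 : 7 / 8 * T < u x := hx.1
    have h2 : csExt N s u x z ≤ t := not_lt.1 hx.2
    rw [abs_sub_comm]
    exact le_trans (by linarith) (le_abs_self _))
  obtain ⟨hEΩf, hEΩ⟩ := cheb (δ := T / 4) (S := E \ Ω) (by linarith) (by
    filter_upwards [hout] with x hx hxE
    have h1 : t < csExt N s u x z := hxE.1
    rw [hx hxE.2, sub_zero]
    exact le_trans (by linarith) (le_abs_self _))
  have hT2 : 0 < T ^ 2 := by positivity
  have hFE' : volume.real (F \ E) ≤ A * V / 144 := by
    refine le_of_mul_le_mul_left ?_ hT2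
    linarith
  have hEΩ' : volume.real (E \ Ω) ≤ A * V / 36 := by
    refine le_of_mul_le_mul_left ?_ hT2
    linarith
  have hΩF : volume.real (Ω \ F) ≤ A * V / 9 := by
    have h1 := measureReal_inter_add_sdiff (μ := volume) (s := Ω) hFm hΩf
    have h2 : volume.real F ≤ volume.real (Ω ∩ F) := by
      rw [Set.inter_comm]
      exact ENNReal.toReal_mono
        ((measure_mono Set.inter_subset_right).trans_lt hΩf.lt_top).ne hlevel.2
    have h3 : volume.real Ω = V := rfl
    linarith [hlevel.1]
  have hFf : volume F ≠ ∞ :=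
    (hlevel.2.trans_lt ((measure_mono Set.inter_subset_right).trans_lt hΩf.lt_top)).ne
  have hΩE : volume.real (Ω \ E) ≤ 17 / 144 * (A * V) := by
    have h1 : volume.real (Ω \ E) ≤ volume.real (Ω \ F) + volume.real (F \ E) :=
      (measureReal_mono (fun x hx => by
        by_cases h : x ∈ F
        · exact Or.inr ⟨h, hx.2⟩
        · exact Or.inl ⟨hx.1, h⟩)
        (measure_union_lt_top ((measure_mono Set.sdiff_subset).trans_lt hΩf.lt_top)
          ((measure_mono Set.sdiff_subset).trans_lt hFf.lt_top)).ne).trans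
        (measureReal_union_le _ _)
    linarith
  have hD : volume.real (symmDiff Ω E) ≤ 7 / 48 * (A * V) := by
    have : volume.real (symmDiff Ω E) ≤ _ := measureReal_union_le (Ω \ E) (E \ Ω)
    linarith
  have hEf : volume E ≠ ∞ := by
    have h1 : volume E ≤ volume Ω + volume (E \ Ω) :=
      (measure_mono (fun x hx => by
        by_cases h : x ∈ Ω
        · exact Or.inl h
        · exact Or.inr ⟨hx, h⟩)).trans (measure_union_le _ _)
    exact (h1.trans_lt (ENNReal.add_lt_top.2 ⟨hΩf.lt_top, hEΩf.lt_top⟩)).ne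
  have hdiff := abs_real_sub_le_real_symmDiff volume hΩf hEf
  rw [abs_sub_comm] at hdiff
  have hAV : 0 < A * V := by positivity
  have hAV2 : A * V ≤ 2 * V := by gcongr
  have hVr : volume.real Ω = V := rfl
  have hdiff2 := abs_le.1 (hdiff.trans hD)
  rw [hVr] at hdiff2
  have hEpos : 0 < volume.real E := by linarith [hdiff2.1]
  refine ⟨?_, ?_⟩
  · exact (hdiff.trans hD).trans (by nlinarith)
  · have h := asym_mul_le_of_symmDiff hN0 hΩ0 hΩf (ENNReal.toReal_ne_zero.1 hEpos.ne').1 hEf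
    refine le_of_mul_le_mul_right (le_trans ?_ h) hEpos
    rw [hVr]
    have h1 : volume.real E ≤ 2 * V := by linarith [hdiff2.2]
    have h2 : A * volume.real E ≤ A * (2 * V) := by gcongr
    change 1 / 5 * A * _ ≤ A * V - _
    linarith
end
end

section
/- Let N ≥ 2 and 1 ≤ q < 2N/(N−2) (with no upper restriction on q beyond q < ∞ when N = 2), and let Ω ⊆ ℝ^N be an open bounded nonempty set. Then limsup_{s↗1} (1−s) λ_{s,q}(Ω) ≤ (ω_N/2) λ_{1,q}(Ω), where ω_N is the Lebesgue measure of the unit ball in ℝ^N and λ_{1,q}(Ω) = inf { ∫_Ω |∇u|² dx : u ∈ C_c^∞(Ω), ‖u‖_{L^q(Ω)} = 1 }. -/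
open MeasureTheory Filter
open scoped ENNReal NNReal Topology FourierTransform RealInnerProductSpace

noncomputable section

/-- The sharp Poincaré–Sobolev constant for the Dirichlet Laplacian:
`λ_{1,q}(Ω) = inf { ∫_Ω |∇u|² : u ∈ C_c^∞(Ω), ‖u‖_{L^q(Ω)} = 1 }`. -/
def sobolevConst1 (N : ℕ) (q : ℝ) (Ω : Set (Eu N)) : ℝ :=
  sInf { c : ℝ | ∃ u : Eu N → ℝ, ContDiff ℝ (⊤ : ℕ∞) u ∧ HasCompactSupport u ∧
    tsupport u ⊆ Ω ∧ (∫ x in Ω, |u x| ^ q) = 1 ∧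
    c = ∫ x in Ω, ‖fderiv ℝ u x‖ ^ 2 }

/-- `ω_N`, the Lebesgue measure of the unit ball of `ℝ^N`. -/
def omegaN (N : ℕ) : ℝ := (volume (Metric.ball (0 : Eu N) 1)).toReal

/-- A radially weighted integral of `⟪v, h⟫²` depends on `v` only through its norm. -/
lemma lintegral_radial_mul_inner_sq_congr {E : Type*} [NormedAddCommGroup E]
    [InnerProductSpace ℝ E] [FiniteDimensional ℝ E] [MeasurableSpace E] [BorelSpace E]
    (k : ℝ → ℝ≥0∞) {v w : E} (hvw : ‖v‖ = ‖w‖) :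
    ∫⁻ h : E, k ‖h‖ * ENNReal.ofReal (⟪v, h⟫ ^ 2) =
      ∫⁻ h : E, k ‖h‖ * ENNReal.ofReal (⟪w, h⟫ ^ 2) := by
  set R := (ℝ ∙ (v - w))ᗮ.reflection with hR
  have hRv : R v = w := Submodule.reflection_sub hvw
  rw [← R.measurePreserving.lintegral_comp_emb R.toHomeomorph.measurableEmbedding
    (fun h => k ‖h‖ * ENNReal.ofReal (⟪w, h⟫ ^ 2))]
  refine lintegral_congr fun h => ?_
  rw [← hRv, R.inner_map_map, R.norm_map]

/-- Averaging `⟪v, h⟫²` against a radial weight. -/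
lemma card_mul_lintegral_radial_mul_inner_sq (N : ℕ) {k : ℝ → ℝ≥0∞} (hk : Measurable k)
    (v : Eu N) :
    N * ∫⁻ h : Eu N, k ‖h‖ * ENNReal.ofReal (⟪v, h⟫ ^ 2) =
      ENNReal.ofReal (‖v‖ ^ 2) * ∫⁻ h : Eu N, k ‖h‖ * ENNReal.ofReal (‖h‖ ^ 2) := by
  have hcoord (i : Fin N) : ∫⁻ h : Eu N, k ‖h‖ * ENNReal.ofReal (⟪v, h⟫ ^ 2) =
      ENNReal.ofReal (‖v‖ ^ 2) * ∫⁻ h : Eu N, k ‖h‖ * ENNReal.ofReal (h i ^ 2) := by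
    rw [lintegral_radial_mul_inner_sq_congr k
      (w := ‖v‖ • EuclideanSpace.single i (1 : ℝ)) (by simp [norm_smul]),
      ← lintegral_const_mul _ (by fun_prop)]
    refine lintegral_congr fun h => ?_
    rw [inner_smul_left, EuclideanSpace.inner_single_left, mul_pow,
      ENNReal.ofReal_mul (by positivity)]
    simp only [map_one, one_mul, conj_trivial]
    ring
  calc N * ∫⁻ h : Eu N, k ‖h‖ * ENNReal.ofReal (⟪v, h⟫ ^ 2)
      = ∑ _i : Fin N, ∫⁻ h : Eu N, k ‖h‖ * ENNReal.ofReal (⟪v, h⟫ ^ 2) := by simp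
    _ = ∑ i : Fin N, ENNReal.ofReal (‖v‖ ^ 2) *
          ∫⁻ h : Eu N, k ‖h‖ * ENNReal.ofReal (h i ^ 2) :=
        Finset.sum_congr rfl fun i _ => hcoord i
    _ = ENNReal.ofReal (‖v‖ ^ 2) * ∫⁻ h : Eu N, k ‖h‖ * ENNReal.ofReal (‖h‖ ^ 2) := by
        rw [← Finset.mul_sum, ← lintegral_finsetSum _ (fun i _ => by fun_prop)]
        congr 1
        refine lintegral_congr fun h => ?_
        rw [← Finset.mul_sum, ← ENNReal.ofReal_sum_of_nonneg (fun i _ => sq_nonneg _),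
          EuclideanSpace.real_norm_sq_eq]

/-- The kernel `r ^ (-p)` cut off outside the unit interval. -/
def truncKernel (p r : ℝ) : ℝ≥0∞ :=
  (Set.Iio (1 : ℝ)).indicator (fun r => ENNReal.ofReal (r ^ p)⁻¹) r

lemma measurable_truncKernel (p : ℝ) : Measurable (truncKernel p) :=
  Measurable.indicator (by fun_prop) measurableSet_Iio

lemma lintegral_truncKernel_mul_norm_sq {N : ℕ} (hN : 1 ≤ N) {s : ℝ} (hs : s < 1) :
    ∫⁻ h : Eu N, truncKernel (N + 2 * s) ‖h‖ * ENNReal.ofReal (‖h‖ ^ 2) =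
      ENNReal.ofReal (N * (omegaN N / (2 * (1 - s)))) := by
  have : Nonempty (Fin N) := ⟨⟨0, hN⟩⟩
  have : Nontrivial (Eu N) := inferInstance
  set f : ℝ → ℝ := (Set.Iio (1 : ℝ)).indicator
    (fun r => (r ^ ((N : ℝ) + 2 * s))⁻¹ * r ^ 2) with hf
  have hpow : Set.EqOn (fun y : ℝ => y ^ (N - 1) • f y)
      ((Set.Ioc (0 : ℝ) 1).indicator fun y => if y = 1 then 0 else y ^ (1 - 2 * s))
      (Set.Ioi 0) := by
    intro y hy
    have hy : 0 < y := hy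
    rcases lt_trichotomy y 1 with h1 | h1 | h1
    · have : y ∈ Set.Ioc (0 : ℝ) 1 := ⟨hy, h1.le⟩
      simp only [hf, Set.indicator, this, Set.mem_Iio, h1, if_true, h1.ne, if_false, smul_eq_mul]
      rw [← Real.rpow_natCast y (N - 1), ← Real.rpow_natCast y 2, ← Real.rpow_neg hy.le,
        ← Real.rpow_add hy, ← Real.rpow_add hy]
      congr 1
      push_cast [hN]
      ring
    · simp [hf, h1]
    · simp [hf, h1.le, h1]
  have hint : IntegrableOn (fun y : ℝ => y ^ (1 - 2 * s)) (Set.Ioc 0 1) := by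
    have := intervalIntegral.intervalIntegrable_rpow' (a := 0) (b := 1)
      (r := 1 - 2 * s) (by linarith)
    rwa [intervalIntegrable_iff_integrableOn_Ioc_of_le zero_le_one] at this
  have hae : (fun y : ℝ => if y = 1 then 0 else y ^ (1 - 2 * s))
      =ᵐ[volume] fun y => y ^ (1 - 2 * s) := by
    filter_upwards [Measure.ae_ne volume (1 : ℝ)] with y hy
    simp [hy]
  have hintf : Integrable (fun h : Eu N => f ‖h‖) := by
    rw [integrable_fun_norm_addHaar, finrank_euclideanSpace_fin,
      integrableOn_congr_fun hpow measurableSet_Ioi]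
    refine Integrable.integrableOn ?_
    rw [integrable_indicator_iff measurableSet_Ioc]
    exact hint.congr (ae_restrict_of_ae hae.symm)
  have hval : ∫ h : Eu N, f ‖h‖ = N * (omegaN N / (2 * (1 - s))) := by
    rw [integral_fun_norm_addHaar, finrank_euclideanSpace_fin,
      setIntegral_congr_fun measurableSet_Ioi hpow, setIntegral_indicator measurableSet_Ioc,
      Set.inter_eq_right.2 Set.Ioc_subset_Ioi_self,
      integral_congr_ae (ae_restrict_of_ae hae),
      ← intervalIntegral.integral_of_le zero_le_one, integral_rpow (Or.inl (by linarith))]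
    have h2 : 1 - 2 * s + 1 ≠ 0 := by linarith
    have h3 : 1 - s ≠ 0 := by linarith
    rw [Real.zero_rpow h2, Real.one_rpow, nsmul_eq_mul, smul_eq_mul, omegaN, Measure.real]
    congr 1
    field_simp
    ring
  have hf0 (h : Eu N) : 0 ≤ f ‖h‖ :=
    Set.indicator_apply_nonneg fun _ => by positivity
  rw [← hval, ofReal_integral_eq_lintegral_ofReal hintf (ae_of_all _ hf0)]
  refine lintegral_congr fun h => ?_
  by_cases h1 : ‖h‖ < 1
  · simp only [truncKernel, hf, Set.indicator, Set.mem_Iio, h1, if_true]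
    rw [ENNReal.ofReal_mul (by positivity)]
  · simp [truncKernel, hf, h1]

lemma lintegral_norm_rpow_compl_ball_lt_top (N : ℕ) :
    ∫⁻ h in (Metric.ball (0 : Eu N) 1)ᶜ, ENNReal.ofReal (‖h‖ ^ ((N : ℝ) + 1))⁻¹ < ∞ := by
  have hfin : ∫⁻ h : Eu N, ENNReal.ofReal ((1 + ‖h‖) ^ (-((N : ℝ) + 1))) < ∞ :=
    finite_integral_one_add_norm (by simp)
  refine lt_of_le_of_lt (b := ENNReal.ofReal (2 ^ ((N : ℝ) + 1)) *
    ∫⁻ h : Eu N, ENNReal.ofReal ((1 + ‖h‖) ^ (-((N : ℝ) + 1)))) ?_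
    (ENNReal.mul_lt_top ENNReal.ofReal_lt_top hfin)
  rw [← lintegral_const_mul _ (by fun_prop)]
  refine (setLIntegral_mono' measurableSet_ball.compl fun h hh => ?_).trans
    (setLIntegral_le_lintegral _ _)
  have hh : 1 ≤ ‖h‖ := by simpa using hh
  rw [← ENNReal.ofReal_mul (by positivity)]
  refine ENNReal.ofReal_le_ofReal ?_
  rw [Real.rpow_neg (by positivity), ← div_eq_mul_inv, ← Real.div_rpow (by norm_num) (by positivity),
    ← Real.inv_rpow (by positivity)]
  refine Real.rpow_le_rpow (by positivity) ?_ (by positivity)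
  rw [inv_eq_one_div, div_le_div_iff₀ (by positivity) (by positivity)]
  linarith

/-- Jensen's inequality for the square on the unit interval. -/
lemma sq_intervalIntegral_le {f : ℝ → ℝ} (hf : Continuous f) :
    (∫ t in (0 : ℝ)..1, f t) ^ 2 ≤ ∫ t in (0 : ℝ)..1, f t ^ 2 := by
  set m := ∫ t in (0 : ℝ)..1, f t with hm
  have h0 : 0 ≤ ∫ t in (0 : ℝ)..1, (f t - m) ^ 2 :=
    intervalIntegral.integral_nonneg zero_le_one fun t _ => sq_nonneg _
  have h1 : ∫ t in (0 : ℝ)..1, (f t - m) ^ 2 =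
      (∫ t in (0 : ℝ)..1, f t ^ 2) - 2 * m * m + m ^ 2 := by
    have : ∀ t, (f t - m) ^ 2 = f t ^ 2 - 2 * m * f t + m ^ 2 := fun t => by ring
    simp_rw [this]
    rw [intervalIntegral.integral_add
        (Continuous.intervalIntegrable (by fun_prop) _ _) (by simp),
      intervalIntegral.integral_sub (Continuous.intervalIntegrable (by fun_prop) _ _)
        (Continuous.intervalIntegrable (by fun_prop) _ _),
      intervalIntegral.integral_const_mul, ← hm]
    simp
  nlinarith

lemma ofReal_sq_sub_le_lintegral {N : ℕ} {u : Eu N → ℝ} (hu : ContDiff ℝ 1 u) (x h : Eu N) :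
    ENNReal.ofReal ((u x - u (x + h)) ^ 2) ≤
      ∫⁻ t in Set.Ioc (0 : ℝ) 1, ENNReal.ofReal (fderiv ℝ u (x + t • h) h ^ 2) := by
  have hd : Continuous (fderiv ℝ u) := hu.continuous_fderiv one_ne_zero
  have hcont : Continuous fun t : ℝ => fderiv ℝ u (x + t • h) h := by fun_prop
  have hftc : ∫ t in (0 : ℝ)..1, fderiv ℝ u (x + t • h) h = u (x + h) - u x := by
    have := intervalIntegral.integral_eq_sub_of_hasDerivAt (a := 0) (b := 1)
      (f := fun t : ℝ => u (x + t • h)) (f' := fun t => fderiv ℝ u (x + t • h) h)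
      (fun t _ => ?_) (hcont.intervalIntegrable _ _)
    · simpa using this
    · have h1 : HasDerivAt (fun t : ℝ => x + t • h) h t := by
        simpa using ((hasDerivAt_id t).smul_const h).const_add x
      exact ((hu.differentiable one_ne_zero _).hasFDerivAt).comp_hasDerivAt t h1
  have hint : IntegrableOn (fun t : ℝ => fderiv ℝ u (x + t • h) h ^ 2) (Set.Ioc 0 1) :=
    ((hcont.pow 2).integrableOn_Icc).mono_set Set.Ioc_subset_Icc_self
  rw [← ofReal_integral_eq_lintegral_ofReal hint (ae_of_all _ fun t => sq_nonneg _),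
    ← intervalIntegral.integral_of_le zero_le_one]
  refine ENNReal.ofReal_le_ofReal ?_
  have := sq_intervalIntegral_le hcont
  rw [hftc] at this
  linarith [this, show (u x - u (x + h)) ^ 2 = (u (x + h) - u x) ^ 2 by ring]

lemma lintegral_sq_sub_le_fderiv {N : ℕ} {u : Eu N → ℝ} (hu : ContDiff ℝ 1 u) (h : Eu N) :
    ∫⁻ x, ENNReal.ofReal ((u x - u (x + h)) ^ 2) ≤
      ∫⁻ x, ENNReal.ofReal (fderiv ℝ u x h ^ 2) := by
  have hd : Continuous (fderiv ℝ u) := hu.continuous_fderiv one_ne_zero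
  calc ∫⁻ x, ENNReal.ofReal ((u x - u (x + h)) ^ 2)
      ≤ ∫⁻ x, ∫⁻ t in Set.Ioc (0 : ℝ) 1, ENNReal.ofReal (fderiv ℝ u (x + t • h) h ^ 2) :=
        lintegral_mono fun x => ofReal_sq_sub_le_lintegral hu x h
    _ = ∫⁻ t in Set.Ioc (0 : ℝ) 1, ∫⁻ x, ENNReal.ofReal (fderiv ℝ u (x + t • h) h ^ 2) := by
        refine lintegral_lintegral_swap (Measurable.aemeasurable ?_)
        simp only [Function.uncurry_def]
        refine ENNReal.measurable_ofReal.comp (Continuous.measurable ?_)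
        fun_prop
    _ = ∫⁻ _t in Set.Ioc (0 : ℝ) 1, ∫⁻ x, ENNReal.ofReal (fderiv ℝ u x h ^ 2) := by
        refine lintegral_congr fun t => ?_
        exact lintegral_add_right_eq_self (fun x => ENNReal.ofReal (fderiv ℝ u x h ^ 2)) (t • h)
    _ = ∫⁻ x, ENNReal.ofReal (fderiv ℝ u x h ^ 2) := by simp

lemma lintegral_sq_sub_le_four_mul {N : ℕ} {u : Eu N → ℝ} (hu : Continuous u) (h : Eu N) :
    ∫⁻ x, ENNReal.ofReal ((u x - u (x + h)) ^ 2) ≤ 4 * ∫⁻ x, ENNReal.ofReal (u x ^ 2) := by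
  calc ∫⁻ x, ENNReal.ofReal ((u x - u (x + h)) ^ 2)
      ≤ ∫⁻ x, (2 * ENNReal.ofReal (u x ^ 2) + 2 * ENNReal.ofReal (u (x + h) ^ 2)) := by
        refine lintegral_mono fun x => ?_
        have h2 : (2 : ℝ≥0∞) = ENNReal.ofReal 2 := by simp
        simp only [h2]
        rw [← ENNReal.ofReal_mul (by norm_num), ← ENNReal.ofReal_mul (by norm_num),
          ← ENNReal.ofReal_add (by positivity) (by positivity)]
        exact ENNReal.ofReal_le_ofReal (by nlinarith [sq_nonneg (u x + u (x + h))])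
    _ = 4 * ∫⁻ x, ENNReal.ofReal (u x ^ 2) := by
        rw [lintegral_add_left (by fun_prop), lintegral_const_mul _ (by fun_prop),
          lintegral_const_mul _ (by fun_prop),
          lintegral_add_right_eq_self (fun x => ENNReal.ofReal (u x ^ 2)) h, ← add_mul]
        norm_num

lemma gagliardoSq_eq_lintegral_translate {N : ℕ} (s : ℝ) {u : Eu N → ℝ} (hu : Continuous u) :
    gagliardoSq N s u = ∫⁻ h : Eu N, ENNReal.ofReal (‖h‖ ^ ((N : ℝ) + 2 * s))⁻¹ *
      ∫⁻ x, ENNReal.ofReal ((u x - u (x + h)) ^ 2) := by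
  have hum : Measurable u := hu.measurable
  calc gagliardoSq N s u
      = ∫⁻ x, ∫⁻ h, ENNReal.ofReal (‖h‖ ^ ((N : ℝ) + 2 * s))⁻¹ *
          ENNReal.ofReal ((u x - u (x + h)) ^ 2) := by
        refine lintegral_congr fun x => ?_
        rw [← lintegral_add_left_eq_self _ x]
        refine lintegral_congr fun h => ?_
        rw [sq_abs, div_eq_inv_mul, ENNReal.ofReal_mul (by positivity), sub_add_cancel_left,
          norm_neg]
    _ = ∫⁻ h, ∫⁻ x, ENNReal.ofReal (‖h‖ ^ ((N : ℝ) + 2 * s))⁻¹ *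
          ENNReal.ofReal ((u x - u (x + h)) ^ 2) := by
        refine lintegral_lintegral_swap (Measurable.aemeasurable ?_)
        simp only [Function.uncurry_def]
        fun_prop
    _ = _ := lintegral_congr fun h => lintegral_const_mul _ (by fun_prop)

lemma lintegral_truncKernel_mul_fderiv_sq {N : ℕ} (hN : 1 ≤ N) {s : ℝ} (hs : s < 1)
    {u : Eu N → ℝ} (hu : ContDiff ℝ 1 u) :
    ∫⁻ h : Eu N, truncKernel (N + 2 * s) ‖h‖ * ∫⁻ x, ENNReal.ofReal (fderiv ℝ u x h ^ 2) =
      ENNReal.ofReal (omegaN N / (2 * (1 - s))) * ∫⁻ x, ENNReal.ofReal (‖fderiv ℝ u x‖ ^ 2) := by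
  have hd : Continuous (fderiv ℝ u) := hu.continuous_fderiv one_ne_zero
  have hk := measurable_truncKernel (N + 2 * s)
  have hN0 : (N : ℝ≥0∞) ≠ 0 := by exact_mod_cast (by omega : N ≠ 0)
  calc ∫⁻ h : Eu N, truncKernel (N + 2 * s) ‖h‖ * ∫⁻ x, ENNReal.ofReal (fderiv ℝ u x h ^ 2)
      = ∫⁻ h : Eu N, ∫⁻ x, truncKernel (N + 2 * s) ‖h‖ *
          ENNReal.ofReal (fderiv ℝ u x h ^ 2) :=
        lintegral_congr fun h => (lintegral_const_mul _ (by fun_prop)).symm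
    _ = ∫⁻ x, ∫⁻ h : Eu N, truncKernel (N + 2 * s) ‖h‖ *
          ENNReal.ofReal (fderiv ℝ u x h ^ 2) := by
        refine lintegral_lintegral_swap (Measurable.aemeasurable ?_)
        simp only [Function.uncurry_def]
        have : Measurable fun a : Eu N × Eu N => fderiv ℝ u a.2 a.1 :=
          Continuous.measurable (by fun_prop)
        fun_prop
    _ = ∫⁻ x, ENNReal.ofReal (omegaN N / (2 * (1 - s))) *
          ENNReal.ofReal (‖fderiv ℝ u x‖ ^ 2) := by
        refine lintegral_congr fun x => ?_
        have key := card_mul_lintegral_radial_mul_inner_sq N hk (gradient u x)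
        simp only [inner_gradient_left] at key
        have hnorm : ‖gradient u x‖ = ‖fderiv ℝ u x‖ := by simp [gradient]
        rw [lintegral_truncKernel_mul_norm_sq hN hs, hnorm, ENNReal.ofReal_mul (by positivity),
          ENNReal.ofReal_natCast, mul_left_comm] at key
        rw [(ENNReal.mul_right_inj hN0 (ENNReal.natCast_ne_top N)).1 key, mul_comm]
    _ = _ := lintegral_const_mul _ (by fun_prop)

lemma gagliardoSq_le {N : ℕ} (hN : 1 ≤ N) {s : ℝ} (hs : 1 / 2 ≤ s) (hs1 : s < 1)
    {u : Eu N → ℝ} (hu : ContDiff ℝ 1 u) :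
    gagliardoSq N s u ≤
      ENNReal.ofReal (omegaN N / (2 * (1 - s))) * (∫⁻ x, ENNReal.ofReal (‖fderiv ℝ u x‖ ^ 2)) +
      (∫⁻ h in (Metric.ball (0 : Eu N) 1)ᶜ, ENNReal.ofReal (‖h‖ ^ ((N : ℝ) + 1))⁻¹) *
        (4 * ∫⁻ x, ENNReal.ofReal (u x ^ 2)) := by
  rw [gagliardoSq_eq_lintegral_translate s hu.continuous,
    ← lintegral_add_compl _ (measurableSet_ball (x := (0 : Eu N)) (ε := 1))]
  refine add_le_add ?_ ?_
  · rw [← lintegral_truncKernel_mul_fderiv_sq hN hs1 hu]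
    refine (setLIntegral_mono' measurableSet_ball fun h hh => ?_).trans
      (setLIntegral_le_lintegral (Metric.ball (0 : Eu N) 1) _)
    have hh : ‖h‖ < 1 := by simpa using hh
    simp only [truncKernel, Set.indicator, Set.mem_Iio, hh, if_true]
    exact mul_le_mul_right (lintegral_sq_sub_le_fderiv hu h) _
  · rw [← lintegral_mul_const _ (by fun_prop)]
    refine setLIntegral_mono' measurableSet_ball.compl fun h hh => ?_
    have hh : 1 ≤ ‖h‖ := by simpa using hh
    refine mul_le_mul' (ENNReal.ofReal_le_ofReal ?_) (lintegral_sq_sub_le_four_mul hu.continuous h)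
    gcongr
    linarith

/-- For a test function, `(1 - s) [u]_{W^{s,2}}²` exceeds `(ω_N / 2) ∫ |∇u|²` by at most
a multiple of `1 - s`. -/
lemma exists_one_sub_mul_gagliardoSqR_le {N : ℕ} (hN : 1 ≤ N) {u : Eu N → ℝ}
    (hu : ContDiff ℝ 1 u) (hcs : HasCompactSupport u) :
    ∃ C : ℝ, ∀ s : ℝ, 1 / 2 ≤ s → s < 1 →
      (1 - s) * gagliardoSqR N s u ≤
        omegaN N / 2 * (∫ x, ‖fderiv ℝ u x‖ ^ 2) + (1 - s) * C := by
  have hd : Continuous (fderiv ℝ u) := hu.continuous_fderiv one_ne_zero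
  have hI1 : Integrable fun x => ‖fderiv ℝ u x‖ ^ 2 := by
    have hs : HasCompactSupport fun x => ‖fderiv ℝ u x‖ ^ 2 :=
      (hcs.fderiv ℝ).comp_left (g := fun L : Eu N →L[ℝ] ℝ => ‖L‖ ^ 2) (by simp)
    exact Continuous.integrable_of_hasCompactSupport (by fun_prop) hs
  have hI2 : Integrable fun x => u x ^ 2 := by
    have hs : HasCompactSupport fun x => u x ^ 2 :=
      hcs.comp_left (g := fun y : ℝ => y ^ 2) (by simp)
    exact (hu.continuous.pow 2).integrable_of_hasCompactSupport hs
  obtain ⟨B, hB⟩ : ∃ B, B =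
      (∫⁻ h in (Metric.ball (0 : Eu N) 1)ᶜ, ENNReal.ofReal (‖h‖ ^ ((N : ℝ) + 1))⁻¹) *
    (4 * ∫⁻ x, ENNReal.ofReal (u x ^ 2)) := ⟨_, rfl⟩
  have hBtop : B ≠ ∞ := by
    rw [hB, ← ofReal_integral_eq_lintegral_ofReal hI2 (ae_of_all _ fun x => sq_nonneg _)]
    exact ENNReal.mul_ne_top (lintegral_norm_rpow_compl_ball_lt_top N).ne
      (ENNReal.mul_ne_top (by norm_num) ENNReal.ofReal_ne_top)
  refine ⟨B.toReal, fun s hs hs1 => ?_⟩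
  have hpos : 0 < 1 - s := by linarith
  have hω : 0 ≤ omegaN N := ENNReal.toReal_nonneg
  have hle := gagliardoSq_le hN hs hs1 hu
  rw [← hB, ← ofReal_integral_eq_lintegral_ofReal hI1 (ae_of_all _ fun x => sq_nonneg _),
    ← ENNReal.ofReal_mul (by positivity)] at hle
  have hR := ENNReal.toReal_mono (ENNReal.add_ne_top.2 ⟨ENNReal.ofReal_ne_top, hBtop⟩) hle
  rw [ENNReal.toReal_add ENNReal.ofReal_ne_top hBtop, ENNReal.toReal_ofReal
    (mul_nonneg (by positivity) (integral_nonneg fun x => sq_nonneg _))] at hR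
  calc (1 - s) * gagliardoSqR N s u
      ≤ (1 - s) * (omegaN N / (2 * (1 - s)) * (∫ x, ‖fderiv ℝ u x‖ ^ 2) + B.toReal) :=
        mul_le_mul_of_nonneg_left hR hpos.le
    _ = _ := by field_simp

lemma sobolevConst_le_gagliardoSqR {N : ℕ} {s q : ℝ} {Ω : Set (Eu N)} {u : Eu N → ℝ}
    (hu : ContDiff ℝ (⊤ : ℕ∞) u) (hcs : HasCompactSupport u) (hsub : tsupport u ⊆ Ω)
    (hnorm : (∫ x in Ω, |u x| ^ q) = 1) :
    sobolevConst N s q Ω ≤ gagliardoSqR N s u := by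
  refine csInf_le ⟨0, ?_⟩ ⟨u, hu, hcs, hsub, hnorm, rfl⟩
  rintro c ⟨v, -, -, -, -, rfl⟩
  exact ENNReal.toReal_nonneg

/-- Estimate (A.1) of Lemma A.1: for every open bounded nonempty `Ω ⊆ ℝ^N`,
`limsup_{s↗1} (1-s) λ_{s,q}(Ω) ≤ (ω_N/2) λ_{1,q}(Ω)`, phrased as: for every `ε > 0`,
eventually along `s → 1⁻`, `(1-s) λ_{s,q}(Ω) ≤ (ω_N/2) λ_{1,q}(Ω) + ε`. -/
theorem limsup_sobolevConst_le
    (N : ℕ) (hN : 2 ≤ N) (q : ℝ) (hq1 : 1 ≤ q)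
    (hq2 : N = 2 ∨ q < 2 * N / ((N : ℝ) - 2))
    (Ω : Set (Eu N)) (hΩo : IsOpen Ω) (hΩb : Bornology.IsBounded Ω) (hΩne : Ω.Nonempty) :
    ∀ ε : ℝ, 0 < ε →
      ∀ᶠ s in 𝓝[<] (1 : ℝ),
        (1 - s) * sobolevConst N s q Ω ≤ omegaN N / 2 * sobolevConst1 N q Ω + ε := by

  intro ε hε
  have hω : 0 ≤ omegaN N := ENNReal.toReal_nonneg
  by_cases hne : ∃ u : Eu N → ℝ, ContDiff ℝ (⊤ : ℕ∞) u ∧ HasCompactSupport u ∧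
      tsupport u ⊆ Ω ∧ (∫ x in Ω, |u x| ^ q) = 1
  · obtain ⟨u₀, hu₀⟩ := hne
    obtain ⟨c, ⟨u, hu, hcs, hsub, hnorm, rfl⟩, hlt⟩ := Real.lt_sInf_add_pos
      (s := { c : ℝ | ∃ u : Eu N → ℝ, ContDiff ℝ (⊤ : ℕ∞) u ∧ HasCompactSupport u ∧
        tsupport u ⊆ Ω ∧ (∫ x in Ω, |u x| ^ q) = 1 ∧ c = ∫ x in Ω, ‖fderiv ℝ u x‖ ^ 2 })
      ⟨_, u₀, hu₀.1, hu₀.2.1, hu₀.2.2.1, hu₀.2.2.2, rfl⟩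
      (ε := ε / (omegaN N + 1)) (by positivity)
    change _ < sobolevConst1 N q Ω + _ at hlt
    have hfull : ∫ x in Ω, ‖fderiv ℝ u x‖ ^ 2 = ∫ x, ‖fderiv ℝ u x‖ ^ 2 := by
      refine setIntegral_eq_integral_of_forall_compl_eq_zero fun x hx => ?_
      have hx' : x ∉ tsupport (fderiv ℝ u) := fun h => hx (hsub (tsupport_fderiv_subset ℝ h))
      simp [image_eq_zero_of_notMem_tsupport hx']
    obtain ⟨C, hC⟩ := exists_one_sub_mul_gagliardoSqR_le (by omega)
      (hu.of_le (by exact_mod_cast le_top)) hcs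
    have hsmall : ∀ᶠ s in 𝓝[<] (1 : ℝ), (1 - s) * C < ε / 2 := by
      have : Tendsto (fun s : ℝ => (1 - s) * C) (𝓝[<] 1) (𝓝 ((1 - 1) * C)) :=
        Tendsto.mono_left (Continuous.tendsto (by fun_prop) 1) nhdsWithin_le_nhds
      exact this.eventually (gt_mem_nhds (by simpa using hε))
    filter_upwards [hsmall, self_mem_nhdsWithin,
      nhdsWithin_le_nhds (lt_mem_nhds (show (1 / 2 : ℝ) < 1 by norm_num))] with s h1 h2 h3
    have h2 : s < 1 := h2
    have h4 := mul_le_mul_of_nonneg_left (sobolevConst_le_gagliardoSqR (s := s) hu hcs hsub hnorm)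
      (show (0 : ℝ) ≤ 1 - s by linarith)
    have h5 := hC s (le_of_lt h3) h2
    rw [← hfull] at h5
    have h6 := mul_le_mul_of_nonneg_left hlt.le (show 0 ≤ omegaN N / 2 by positivity)
    have h7 : omegaN N / 2 * (ε / (omegaN N + 1)) ≤ ε / 2 := by
      rw [div_mul_div_comm, div_le_div_iff₀ (by positivity) (by positivity)]
      nlinarith
    linarith
  · have hs (s : ℝ) : sobolevConst N s q Ω = 0 := by
      rw [sobolevConst, ← Real.sInf_empty]
      congr 1
      exact Set.eq_empty_of_forall_notMem fun c ⟨u, h1, h2, h3, h4, _⟩ => hne ⟨u, h1, h2, h3, h4⟩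
    have h1 : 0 ≤ sobolevConst1 N q Ω := by
      refine Real.sInf_nonneg ?_
      rintro c ⟨u, -, -, -, -, rfl⟩
      exact integral_nonneg fun x => sq_nonneg _
    refine Eventually.of_forall fun s => ?_
    rw [hs, mul_zero]
    positivity
end
end

section
/- (Equivalence of Gagliardo and directional seminorms.) Let N ≥ 1 and 0 < s < 1. There exists a constant C = C(N) > 1 such that for every u ∈ C_c^∞(ℝ^N), (1/C) · Σ_{i=1}^N [u]_{w_i^{s,2}} ≤ [u]_{W^{s,2}} ≤ C · Σ_{i=1}^N [u]_{w_i^{s,2}}, where [u]_{w_i^{s,2}} = ( ∫₀^∞ ∫_{ℝ^N} |u(x+ρ e_i) − u(x)|²/ρ^{1+2s} dx dρ )^{1/2} and e_i denotes the i-th standard basis vector of ℝ^N. -/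
open MeasureTheory Filter
open scoped ENNReal NNReal Topology FourierTransform RealInnerProductSpace

noncomputable section

/-- The directional seminorm
`[u]_{w_i^{s,2}} = (∫₀^∞ ∫_{ℝ^N} |u(x+ρ e_i) - u(x)|²/ρ^{1+2s} dx dρ)^{1/2}`. -/
def dirSemi (N : ℕ) (s : ℝ) (i : Fin N) (u : Eu N → ℝ) : ℝ :=
  Real.sqrt (∫⁻ ρ in Set.Ioi (0 : ℝ), ∫⁻ x, ENNReal.ofReal
    ((u (x + ρ • EuclideanSpace.single i (1 : ℝ)) - u x) ^ 2 / ρ ^ (1 + 2 * s))).toReal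

/-- The squared `L²` norm of the increment `u(· + h) - u`. -/
def incrementSq {N : ℕ} (u : Eu N → ℝ) (h : Eu N) : ℝ≥0∞ :=
  ∫⁻ x, ENNReal.ofReal ((u (x + h) - u x) ^ 2)

/-- The squared directional seminorm of order `s` along the vector `v`. -/
def dirEnergy {N : ℕ} (s : ℝ) (u : Eu N → ℝ) (v : Eu N) : ℝ≥0∞ :=
  ∫⁻ ρ in Set.Ioi (0 : ℝ), ENNReal.ofReal (ρ ^ (-(1 + 2 * s))) * incrementSq u (ρ • v)

/-- The open annulus of radii `1/4` and `1`. -/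
def unitAnnulus (N : ℕ) : Set (Eu N) := {v | 1 / 4 < ‖v‖ ∧ ‖v‖ < 1}

lemma measurableSet_unitAnnulus (N : ℕ) : MeasurableSet (unitAnnulus N) :=
  (measurableSet_lt measurable_const measurable_norm).inter
    (measurableSet_lt measurable_norm measurable_const)

lemma lintegral_comp_smul_addHaar {E : Type*} [NormedAddCommGroup E] [NormedSpace ℝ E]
    [MeasurableSpace E] [BorelSpace E] [FiniteDimensional ℝ E] (μ : Measure E)
    [μ.IsAddHaarMeasure] {f : E → ℝ≥0∞} (hf : Measurable f) {c : ℝ} (hc : c ≠ 0) :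
    ∫⁻ x, f (c • x) ∂μ = ENNReal.ofReal |(c ^ Module.finrank ℝ E)⁻¹| * ∫⁻ x, f x ∂μ := by
  rw [← lintegral_map hf (measurable_const_smul c), Measure.map_addHaar_smul μ hc,
    lintegral_smul_measure, smul_eq_mul]

section Increment

variable {N : ℕ} {u : Eu N → ℝ}

lemma measurable_incrementSq (hu : Continuous u) : Measurable (incrementSq u) := by
  refine Measurable.lintegral_prod_right' (f := fun p : Eu N × Eu N =>
    ENNReal.ofReal ((u (p.2 + p.1) - u p.2) ^ 2)) ?_
  exact (by fun_prop : Continuous fun p : Eu N × Eu N =>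
    (u (p.2 + p.1) - u p.2) ^ 2).measurable.ennreal_ofReal

lemma incrementSq_zero : incrementSq u 0 = 0 := by simp [incrementSq]

lemma incrementSq_neg (h : Eu N) : incrementSq u (-h) = incrementSq u h := by
  unfold incrementSq
  rw [← lintegral_add_right_eq_self _ h]
  refine lintegral_congr fun x => ?_
  rw [add_neg_cancel_right, ← neg_sub, neg_sq]

lemma incrementSq_add_le (hu : Continuous u) (v w : Eu N) :
    incrementSq u (v + w) ≤ 2 * (incrementSq u v + incrementSq u w) := by
  have hw : incrementSq u w = ∫⁻ x, ENNReal.ofReal ((u (x + v + w) - u (x + v)) ^ 2) :=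
    (lintegral_add_right_eq_self (fun x => ENNReal.ofReal ((u (x + w) - u x) ^ 2)) v).symm
  have hm : Measurable fun x => ENNReal.ofReal ((u (x + v) - u x) ^ 2) :=
    (by fun_prop : Continuous fun x => (u (x + v) - u x) ^ 2).measurable.ennreal_ofReal
  rw [hw, incrementSq, incrementSq, ← lintegral_add_left hm,
    ← lintegral_const_mul' _ _ (by norm_num)]
  refine lintegral_mono fun x => ?_
  have h2 : (2 : ℝ≥0∞) = ENNReal.ofReal 2 := by simp
  rw [← ENNReal.ofReal_add (sq_nonneg _) (sq_nonneg _)]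
  refine le_of_le_of_eq ?_ (congrArg (· * _) h2.symm)
  rw [← ENNReal.ofReal_mul (by norm_num), ← add_assoc]
  refine ENNReal.ofReal_le_ofReal ?_
  nlinarith [sq_nonneg ((u (x + v + w) - u (x + v)) - (u (x + v) - u x))]

end Increment

section Directional

variable {N : ℕ} {u : Eu N → ℝ} {s : ℝ}

lemma measurable_uncurry_dirEnergy_integrand (hu : Continuous u) :
    Measurable fun p : Eu N × ℝ =>
      ENNReal.ofReal (p.2 ^ (-(1 + 2 * s))) * incrementSq u (p.2 • p.1) :=
  (by fun_prop : Measurable fun p : Eu N × ℝ => ENNReal.ofReal (p.2 ^ (-(1 + 2 * s)))).mul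
    ((measurable_incrementSq hu).comp (by fun_prop))

lemma measurable_dirEnergy_integrand (hu : Continuous u) (v : Eu N) :
    Measurable fun ρ : ℝ => ENNReal.ofReal (ρ ^ (-(1 + 2 * s))) * incrementSq u (ρ • v) :=
  (measurable_uncurry_dirEnergy_integrand hu).comp (measurable_prodMk_left (x := v))

lemma measurable_dirEnergy (hu : Continuous u) : Measurable (dirEnergy s u) :=
  (measurable_uncurry_dirEnergy_integrand hu).lintegral_prod_right'

lemma dirEnergy_zero : dirEnergy s u 0 = 0 := by simp [dirEnergy, incrementSq_zero]

lemma dirEnergy_neg (v : Eu N) : dirEnergy s u (-v) = dirEnergy s u v := by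
  simp [dirEnergy, incrementSq_neg]

lemma dirEnergy_add_le (hu : Continuous u) (v w : Eu N) :
    dirEnergy s u (v + w) ≤ 2 * (dirEnergy s u v + dirEnergy s u w) := by
  rw [dirEnergy, dirEnergy, dirEnergy, ← lintegral_add_left (measurable_dirEnergy_integrand hu v),
    ← lintegral_const_mul' _ _ (by norm_num)]
  refine lintegral_mono fun ρ => ?_
  rw [smul_add, ← mul_add, mul_left_comm]
  gcongr
  exact incrementSq_add_le hu _ _

lemma dirEnergy_sum_le (hu : Continuous u) {ι : Type*} (t : Finset ι) (v : ι → Eu N) :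
    dirEnergy s u (∑ i ∈ t, v i) ≤ 2 ^ t.card * ∑ i ∈ t, dirEnergy s u (v i) := by
  classical
  induction t using Finset.induction_on with
  | empty => simp [dirEnergy_zero]
  | insert a t ha ih =>
    rw [Finset.sum_insert ha, Finset.sum_insert ha, Finset.card_insert_of_notMem ha]
    refine (dirEnergy_add_le hu _ _).trans ?_
    rw [pow_succ', mul_assoc, mul_add (2 ^ t.card)]
    gcongr
    exact le_mul_of_one_le_left' (one_le_pow₀ (by norm_num))

lemma dirEnergy_smul_of_pos (hu : Continuous u) {c : ℝ} (hc : 0 < c) (v : Eu N) :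
    dirEnergy s u (c • v) = ENNReal.ofReal (c ^ (2 * s)) * dirEnergy s u v := by
  have h := lintegral_comp_smul_addHaar volume
    ((measurable_dirEnergy_integrand (s := s) hu v).indicator measurableSet_Ioi
      (s := Set.Ioi (0 : ℝ))) hc.ne'
  rw [lintegral_indicator measurableSet_Ioi] at h
  have hl : ∀ ρ : ℝ, (Set.Ioi (0 : ℝ)).indicator (fun ρ : ℝ =>
      ENNReal.ofReal (ρ ^ (-(1 + 2 * s))) * incrementSq u (ρ • v)) (c • ρ) =
      ENNReal.ofReal (c ^ (-(1 + 2 * s))) * (Set.Ioi (0 : ℝ)).indicator (fun ρ : ℝ =>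
      ENNReal.ofReal (ρ ^ (-(1 + 2 * s))) * incrementSq u (ρ • c • v)) ρ := by
    intro ρ
    by_cases hρ : 0 < ρ
    · rw [Set.indicator_of_mem (Set.mem_Ioi.2 hρ),
        Set.indicator_of_mem (Set.mem_Ioi.2 (by positivity)), smul_eq_mul,
        Real.mul_rpow hc.le hρ.le, ENNReal.ofReal_mul (by positivity), mul_assoc, smul_smul,
        mul_comm c ρ]
    · have hcρ : c • ρ ∉ Set.Ioi 0 := by rwa [smul_eq_mul, Set.mem_Ioi, mul_pos_iff_of_pos_left hc]
      rw [Set.indicator_of_notMem hcρ, Set.indicator_of_notMem (Set.notMem_Ioi.2 (not_lt.1 hρ)), mul_zero]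
  simp_rw [hl] at h
  rw [lintegral_const_mul' _ _ ENNReal.ofReal_ne_top, lintegral_indicator measurableSet_Ioi] at h
  change _ * dirEnergy s u (c • v) = _ * dirEnergy s u v at h
  calc dirEnergy s u (c • v)
      = ENNReal.ofReal (c ^ (1 + 2 * s)) *
          (ENNReal.ofReal (c ^ (-(1 + 2 * s))) * dirEnergy s u (c • v)) := by
        rw [← mul_assoc, ← ENNReal.ofReal_mul (by positivity), ← Real.rpow_add hc]
        simp
    _ = _ := by
        rw [h, ← mul_assoc, ← ENNReal.ofReal_mul (by positivity), Module.finrank_self, pow_one,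
          abs_of_pos (by positivity), Real.rpow_add hc, Real.rpow_one]
        congr 2
        field_simp

lemma dirEnergy_smul_le (hu : Continuous u) (hs : 0 < s) {c : ℝ} (hc : |c| ≤ 1) (v : Eu N) :
    dirEnergy s u (c • v) ≤ dirEnergy s u v := by
  have key : ∀ b : ℝ, 0 < b → b ≤ 1 → dirEnergy s u (b • v) ≤ dirEnergy s u v := by
    intro b hb hb1
    rw [dirEnergy_smul_of_pos hu hb]
    refine mul_le_of_le_one_left' (ENNReal.ofReal_le_one.2 ?_)
    exact Real.rpow_le_one hb.le hb1 (by positivity)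
  rcases lt_trichotomy c 0 with h | rfl | h
  · rw [← dirEnergy_neg, ← neg_smul]
    exact key _ (by linarith) (by rwa [abs_of_neg h] at hc)
  · simp [dirEnergy_zero]
  · exact key _ h (by rwa [abs_of_pos h] at hc)

end Directional

/-- The weight `∫_{|h|}^{4|h|} ρ^{-(1+2s+N)} dρ` produced by averaging over the annulus. -/
def annulusWeight (N : ℕ) (s : ℝ) (h : Eu N) : ℝ≥0∞ :=
  ∫⁻ ρ in Set.Ioo ‖h‖ (4 * ‖h‖), ENNReal.ofReal (ρ ^ (-(1 + 2 * s + N)))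

lemma inv_smul_mem_unitAnnulus {N : ℕ} {ρ : ℝ} (hρ : 0 < ρ) (h : Eu N) :
    ρ⁻¹ • h ∈ unitAnnulus N ↔ ρ ∈ Set.Ioo ‖h‖ (4 * ‖h‖) := by
  rw [unitAnnulus, Set.mem_ofPred_eq, norm_smul, Real.norm_of_nonneg (inv_nonneg.2 hρ.le),
    Set.mem_Ioo, inv_mul_lt_iff₀ hρ, lt_inv_mul_iff₀ hρ, mul_one, and_comm]
  refine and_congr_right fun _ => ?_
  constructor <;> intro <;> linarith

section Annulus

variable {N : ℕ} {u : Eu N → ℝ} {s : ℝ}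

lemma setLIntegral_unitAnnulus_incrementSq_smul (hu : Continuous u) {ρ : ℝ} (hρ : 0 < ρ) :
    ∫⁻ v in unitAnnulus N, ENNReal.ofReal (ρ ^ (-(1 + 2 * s))) * incrementSq u (ρ • v) =
      ∫⁻ h, (Set.Ioo ‖h‖ (4 * ‖h‖)).indicator
        (fun ρ => ENNReal.ofReal (ρ ^ (-(1 + 2 * s + N)))) ρ * incrementSq u h := by
  have hA := measurableSet_unitAnnulus N
  have hm := measurable_incrementSq hu
  have hf : Measurable fun h => (unitAnnulus N).indicator 1 (ρ⁻¹ • h) * incrementSq u h :=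
    ((measurable_one.indicator hA).comp (measurable_const_smul ρ⁻¹)).mul hm
  have key := lintegral_comp_smul_addHaar volume hf hρ.ne'
  simp only [inv_smul_smul₀ hρ.ne', finrank_euclideanSpace_fin] at key
  rw [lintegral_const_mul' _ _ ENNReal.ofReal_ne_top, ← lintegral_indicator hA]
  have h1 : ∀ v, (unitAnnulus N).indicator (fun v => incrementSq u (ρ • v)) v =
      (unitAnnulus N).indicator 1 v * incrementSq u (ρ • v) := by
    intro v
    by_cases hv : v ∈ unitAnnulus N <;> simp [hv]
  simp_rw [h1]
  rw [key, ← mul_assoc, ← lintegral_const_mul' _ _ (by finiteness)]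
  refine lintegral_congr fun h => ?_
  rw [← mul_assoc]
  congr 1
  by_cases hh : ρ ∈ Set.Ioo ‖h‖ (4 * ‖h‖)
  · rw [Set.indicator_of_mem hh, Set.indicator_of_mem ((inv_smul_mem_unitAnnulus hρ h).2 hh),
      Pi.one_apply, mul_one, ← ENNReal.ofReal_mul (by positivity), abs_of_pos (by positivity),
      neg_add _ (N : ℝ), Real.rpow_add hρ, Real.rpow_neg hρ.le N, Real.rpow_natCast]
  · rw [Set.indicator_of_notMem hh,
      Set.indicator_of_notMem (mt (inv_smul_mem_unitAnnulus hρ h).1 hh), mul_zero]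

lemma setLIntegral_unitAnnulus_dirEnergy (hu : Continuous u) :
    ∫⁻ v in unitAnnulus N, dirEnergy s u v = ∫⁻ h, annulusWeight N s h * incrementSq u h := by
  have hB : MeasurableSet {p : ℝ × Eu N | p.1 ∈ Set.Ioo ‖p.2‖ (4 * ‖p.2‖)} :=
    (measurableSet_lt measurable_snd.norm measurable_fst).inter
      (measurableSet_lt measurable_fst (measurable_snd.norm.const_mul 4))
  have hw : Measurable fun p : ℝ × Eu N => (Set.Ioo ‖p.2‖ (4 * ‖p.2‖)).indicator
      (fun ρ => ENNReal.ofReal (ρ ^ (-(1 + 2 * s + N)))) p.1 :=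
    Measurable.indicator (f := fun p : ℝ × Eu N => ENNReal.ofReal (p.1 ^ (-(1 + 2 * s + N))))
      (by fun_prop) hB
  unfold dirEnergy
  rw [lintegral_lintegral_swap (measurable_uncurry_dirEnergy_integrand hu).aemeasurable,
    setLIntegral_congr_fun measurableSet_Ioi
      fun ρ hρ => setLIntegral_unitAnnulus_incrementSq_smul hu hρ,
    lintegral_lintegral_swap
      (hw.mul ((measurable_incrementSq hu).comp measurable_snd)).aemeasurable]
  refine lintegral_congr fun h => ?_
  have hm : Measurable ((Set.Ioo ‖h‖ (4 * ‖h‖)).indicator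
      fun ρ => ENNReal.ofReal (ρ ^ (-(1 + 2 * s + N)))) :=
    Measurable.indicator (by fun_prop) measurableSet_Ioo
  rw [lintegral_mul_const _ hm, lintegral_indicator measurableSet_Ioo,
    Measure.restrict_restrict measurableSet_Ioo, Set.inter_eq_left.2, annulusWeight]
  exact fun ρ hρ => (norm_nonneg h).trans_lt hρ.1

lemma ofReal_three_mul_rpow {r c p : ℝ} (hr : 0 < r) :
    ENNReal.ofReal (c * r ^ (-(1 + p))) * volume (Set.Ioo r (4 * r)) =
      ENNReal.ofReal (3 * c * r ^ (-p)) := by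
  rw [Real.volume_Ioo, ← ENNReal.ofReal_mul' (by linarith), neg_add, Real.rpow_add hr,
    Real.rpow_neg_one]
  congr 1
  field_simp
  ring

lemma annulusWeight_le (hs : 0 < s) {h : Eu N} (hh : h ≠ 0) :
    annulusWeight N s h ≤ 3 * ENNReal.ofReal (‖h‖ ^ (-(N + 2 * s))) := by
  have hr := norm_pos_iff.2 hh
  calc annulusWeight N s h
      ≤ ∫⁻ _ in Set.Ioo ‖h‖ (4 * ‖h‖), ENNReal.ofReal (1 * ‖h‖ ^ (-(1 + (N + 2 * s)))) := by
        refine setLIntegral_mono' measurableSet_Ioo fun ρ hρ => ENNReal.ofReal_le_ofReal ?_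
        rw [one_mul, show (1 + 2 * s + N) = 1 + (N + 2 * s) by ring]
        exact Real.rpow_le_rpow_of_nonpos hr hρ.1.le (by linarith [N.cast_nonneg (α := ℝ)])
    _ = _ := by
        rw [setLIntegral_const, ofReal_three_mul_rpow hr, mul_one,
          ENNReal.ofReal_mul (by norm_num), ENNReal.ofReal_ofNat]

lemma le_annulusWeight (hs : 0 < s) (hs1 : s < 1) {h : Eu N} (hh : h ≠ 0) :
    ENNReal.ofReal (‖h‖ ^ (-(N + 2 * s))) ≤ 4 ^ (N + 3) * annulusWeight N s h := by
  have hr := norm_pos_iff.2 hh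
  have hN := N.cast_nonneg (α := ℝ)
  have hc : (4 : ℝ) ^ (N + 3) * 4 ^ (-(1 + (N + 2 * s))) ≥ 1 := by
    rw [← Real.rpow_natCast, ← Real.rpow_add (by norm_num)]
    refine Real.one_le_rpow (by norm_num) ?_
    push_cast
    linarith
  have hw : ENNReal.ofReal (3 * 4 ^ (-(1 + (N + 2 * s))) * ‖h‖ ^ (-(N + 2 * s))) ≤
      annulusWeight N s h := by
    rw [← ofReal_three_mul_rpow hr, ← setLIntegral_const]
    refine setLIntegral_mono' measurableSet_Ioo fun ρ hρ => ENNReal.ofReal_le_ofReal ?_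
    rw [← Real.mul_rpow (by norm_num) hr.le, show (1 + 2 * s + N) = 1 + (N + 2 * s) by ring]
    exact Real.rpow_le_rpow_of_nonpos (hr.trans hρ.1) hρ.2.le (by linarith)
  calc ENNReal.ofReal (‖h‖ ^ (-(N + 2 * s)))
      ≤ ENNReal.ofReal (4 ^ (N + 3) *
          (3 * 4 ^ (-(1 + (N + 2 * s))) * ‖h‖ ^ (-(N + 2 * s)))) := by
        refine ENNReal.ofReal_le_ofReal ?_
        have : 0 ≤ ‖h‖ ^ (-(N + 2 * s)) := by positivity
        nlinarith
    _ ≤ _ := by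
        rw [ENNReal.ofReal_mul (by positivity), ENNReal.ofReal_pow (by norm_num),
          ENNReal.ofReal_ofNat]
        gcongr

lemma gagliardoSq_eq_lintegral_incrementSq (hu : Continuous u) :
    gagliardoSq N s u = ∫⁻ h, ENNReal.ofReal (‖h‖ ^ (-(N + 2 * s))) * incrementSq u h := by
  have hx : ∀ x, ∫⁻ y, ENNReal.ofReal (|u x - u y| ^ 2 / ‖x - y‖ ^ ((N : ℝ) + 2 * s)) =
      ∫⁻ h, ENNReal.ofReal (‖h‖ ^ (-(N + 2 * s))) * ENNReal.ofReal ((u (x + h) - u x) ^ 2) := by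
    intro x
    rw [← lintegral_add_left_eq_self _ x]
    refine lintegral_congr fun h => ?_
    rw [← ENNReal.ofReal_mul (by positivity), sq_abs, sub_add_cancel_left, norm_neg,
      Real.rpow_neg (norm_nonneg h), ← neg_sub, neg_sq, div_eq_inv_mul]
  have hm : Measurable fun p : Eu N × Eu N => ENNReal.ofReal (‖p.2‖ ^ (-(N + 2 * s))) *
      ENNReal.ofReal ((u (p.1 + p.2) - u p.1) ^ 2) :=
    (by fun_prop : Measurable fun p : Eu N × Eu N =>
      ENNReal.ofReal (‖p.2‖ ^ (-(N + 2 * s)))).mul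
    (by fun_prop : Continuous fun p : Eu N × Eu N =>
      (u (p.1 + p.2) - u p.1) ^ 2).measurable.ennreal_ofReal
  simp_rw [gagliardoSq, hx]
  rw [lintegral_lintegral_swap hm.aemeasurable]
  exact lintegral_congr fun h => lintegral_const_mul' _ _ ENNReal.ofReal_ne_top

lemma setLIntegral_unitAnnulus_dirEnergy_le (hu : Continuous u) (hs : 0 < s) :
    ∫⁻ v in unitAnnulus N, dirEnergy s u v ≤ 3 * gagliardoSq N s u := by
  rw [setLIntegral_unitAnnulus_dirEnergy hu, gagliardoSq_eq_lintegral_incrementSq hu,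
    ← lintegral_const_mul' _ _ (by norm_num)]
  refine lintegral_mono fun h => ?_
  rcases eq_or_ne h 0 with rfl | hh
  · simp [incrementSq_zero]
  · rw [← mul_assoc]
    gcongr
    exact annulusWeight_le hs hh

lemma gagliardoSq_le_setLIntegral_unitAnnulus (hu : Continuous u) (hs : 0 < s) (hs1 : s < 1) :
    gagliardoSq N s u ≤ 4 ^ (N + 3) * ∫⁻ v in unitAnnulus N, dirEnergy s u v := by
  rw [setLIntegral_unitAnnulus_dirEnergy hu, gagliardoSq_eq_lintegral_incrementSq hu,
    ← lintegral_const_mul' _ _ (by finiteness)]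
  refine lintegral_mono fun h => ?_
  rcases eq_or_ne h 0 with rfl | hh
  · simp [incrementSq_zero]
  · rw [← mul_assoc]
    gcongr
    exact le_annulusWeight hs hs1 hh

end Annulus

section Comparison

variable {N : ℕ} {u : Eu N → ℝ} {s : ℝ}

lemma dirEnergy_mul_volume_ball_le (hu : Continuous u) {e : Eu N} (he : ‖e‖ = 1) :
    dirEnergy s u e * volume (Metric.ball (0 : Eu N) (1 / 4)) ≤
      4 * ∫⁻ v in unitAnnulus N, dirEnergy s u v := by
  have hA := measurableSet_unitAnnulus N
  set B := Metric.ball ((1 / 2 : ℝ) • e) (1 / 4)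
  have hB : ∀ v ∈ B, v ∈ unitAnnulus N ∧ e - v ∈ unitAnnulus N := by
    intro v hv
    have hhalf : ‖(1 / 2 : ℝ) • e‖ = 1 / 2 := by rw [norm_smul, he]; norm_num
    have hsub : e - v - (1 / 2 : ℝ) • e = -(v - (1 / 2 : ℝ) • e) := by module
    have aux : ∀ w, ‖w - (1 / 2 : ℝ) • e‖ < 1 / 4 → w ∈ unitAnnulus N := by
      intro w hw
      have h1 := abs_le.1 ((abs_norm_sub_norm_le w ((1 / 2 : ℝ) • e)).trans hw.le)
      have h2 := (abs_lt.1 ((abs_norm_sub_norm_le w ((1 / 2 : ℝ) • e)).trans_lt hw))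
      rw [hhalf] at h2
      exact ⟨by linarith, by linarith⟩
    rw [mem_ball_iff_norm] at hv
    exact ⟨aux v hv, aux _ (by rwa [hsub, norm_neg])⟩
  have hm := measurable_dirEnergy (s := s) hu
  have h1 : ∫⁻ v in B, dirEnergy s u v ≤ ∫⁻ v in unitAnnulus N, dirEnergy s u v :=
    lintegral_mono_set fun v hv => (hB v hv).1
  have h2 : ∫⁻ v in B, dirEnergy s u (e - v) ≤ ∫⁻ v in unitAnnulus N, dirEnergy s u v := by
    rw [← lintegral_indicator hA,
      ← lintegral_sub_left_eq_self ((unitAnnulus N).indicator (dirEnergy s u)) e,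
      ← lintegral_indicator measurableSet_ball]
    refine lintegral_mono (Set.indicator_le fun v hv => ?_)
    rw [Set.indicator_of_mem (hB v hv).2]
  calc dirEnergy s u e * volume (Metric.ball (0 : Eu N) (1 / 4))
      = ∫⁻ _ in B, dirEnergy s u e := by
        rw [setLIntegral_const, ← Measure.addHaar_ball_center volume ((1 / 2 : ℝ) • e)]
    _ ≤ ∫⁻ v in B, 2 * (dirEnergy s u v + dirEnergy s u (e - v)) := by
        refine lintegral_mono fun v => ?_
        simpa using dirEnergy_add_le (s := s) hu v (e - v)
    _ ≤ 2 * ((∫⁻ v in unitAnnulus N, dirEnergy s u v) +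
          ∫⁻ v in unitAnnulus N, dirEnergy s u v) := by
        rw [lintegral_const_mul' _ _ (by norm_num), lintegral_add_left hm]
        gcongr
    _ = _ := by ring

lemma dirEnergy_le_sum (hu : Continuous u) (hs : 0 < s) {v : Eu N} (hv : ‖v‖ ≤ 1) :
    dirEnergy s u v ≤ 2 ^ N * ∑ i, dirEnergy s u (EuclideanSpace.single i 1) := by
  have hsum : ∑ i, v i • EuclideanSpace.single i (1 : ℝ) = v := by
    simpa using (EuclideanSpace.basisFun (Fin N) ℝ).sum_repr v
  calc dirEnergy s u v = dirEnergy s u (∑ i, v i • EuclideanSpace.single i (1 : ℝ)) := by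
        rw [hsum]
    _ ≤ 2 ^ N * ∑ i, dirEnergy s u (v i • EuclideanSpace.single i (1 : ℝ)) := by
        simpa using dirEnergy_sum_le (s := s) hu Finset.univ
          fun i => v i • EuclideanSpace.single i (1 : ℝ)
    _ ≤ _ := by
        gcongr with i
        exact dirEnergy_smul_le hu hs ((PiLp.norm_apply_le v i).trans hv) _

lemma setLIntegral_unitAnnulus_dirEnergy_le_sum (hu : Continuous u) (hs : 0 < s) :
    ∫⁻ v in unitAnnulus N, dirEnergy s u v ≤
      2 ^ N * volume (Metric.ball (0 : Eu N) 1) *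
        ∑ i, dirEnergy s u (EuclideanSpace.single i 1) := by
  calc ∫⁻ v in unitAnnulus N, dirEnergy s u v
      ≤ ∫⁻ _ in unitAnnulus N, 2 ^ N * ∑ i, dirEnergy s u (EuclideanSpace.single i 1) :=
        setLIntegral_mono' (measurableSet_unitAnnulus N) fun v hv =>
          dirEnergy_le_sum hu hs hv.2.le
    _ ≤ (2 ^ N * ∑ i, dirEnergy s u (EuclideanSpace.single i 1)) *
          volume (Metric.ball (0 : Eu N) 1) := by
        rw [setLIntegral_const]
        gcongr
        exact fun v hv => mem_ball_zero_iff.2 hv.2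
    _ = _ := by ring

end Comparison

section Finiteness

variable {N : ℕ} {u : Eu N → ℝ} {s : ℝ}

lemma incrementSq_le_of_abs_le {c : ℝ} {h : Eu N} (hc : ∀ x, |u (x + h) - u x| ≤ c) :
    incrementSq u h ≤ ENNReal.ofReal (c ^ 2) * (2 * volume (tsupport u)) := by
  have hK : MeasurableSet (tsupport u) := (isClosed_tsupport u).measurableSet
  calc incrementSq u h
      ≤ ∫⁻ x, ENNReal.ofReal (c ^ 2) *
          ((tsupport u).indicator 1 x + (tsupport u).indicator 1 (x + h)) := by
        refine lintegral_mono fun x => ?_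
        by_cases hx : x ∈ tsupport u ∨ x + h ∈ tsupport u
        · refine (ENNReal.ofReal_le_ofReal (sq_le_sq' (abs_le.1 (hc x)).1
            (abs_le.1 (hc x)).2)).trans (le_mul_of_one_le_right' ?_)
          rcases hx with hx | hx <;> simp [hx]
        · rw [not_or] at hx
          simp [image_eq_zero_of_notMem_tsupport hx.1, image_eq_zero_of_notMem_tsupport hx.2]
    _ = _ := by
        rw [lintegral_const_mul' _ _ ENNReal.ofReal_ne_top,
          lintegral_add_left (measurable_one.indicator hK),
          lintegral_add_right_eq_self (fun x => (tsupport u).indicator 1 x),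
          lintegral_indicator_one hK, two_mul]

lemma exists_incrementSq_le (hu : ContDiff ℝ (⊤ : ℕ∞) u) (hc : HasCompactSupport u) :
    ∃ A : ℝ, ∀ h, incrementSq u h ≤ ENNReal.ofReal A ∧
      incrementSq u h ≤ ENNReal.ofReal (A * ‖h‖ ^ 2) := by
  obtain ⟨L, hL⟩ := hu.lipschitzWith_of_hasCompactSupport hc (by simp)
  obtain ⟨M, hM⟩ := hc.exists_bound_of_continuous hu.continuous
  have hK : 2 * volume (tsupport u) ≠ ∞ :=
    ENNReal.mul_ne_top (by norm_num) hc.isCompact.measure_ne_top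
  set V := (2 * volume (tsupport u)).toReal
  have hV : 0 ≤ V := ENNReal.toReal_nonneg
  have key : ∀ c h, (∀ x, |u (x + h) - u x| ≤ c) →
      incrementSq u h ≤ ENNReal.ofReal (c ^ 2 * V) := by
    intro c h hch
    rw [ENNReal.ofReal_mul (sq_nonneg c), ENNReal.ofReal_toReal hK]
    exact incrementSq_le_of_abs_le hch
  refine ⟨((2 * M) ^ 2 + L ^ 2) * V, fun h => ⟨?_, ?_⟩⟩
  · refine (key (2 * M) h fun x => ?_).trans (ENNReal.ofReal_le_ofReal ?_)
    · have h1 := hM (x + h)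
      have h2 := hM x
      rw [Real.norm_eq_abs] at h1 h2
      exact (abs_sub _ _).trans (by linarith)
    · gcongr
      exact le_add_of_nonneg_right (sq_nonneg _)
  · refine (key (L * ‖h‖) h fun x => ?_).trans (ENNReal.ofReal_le_ofReal ?_)
    · simpa using hL.norm_sub_le (x + h) x
    · rw [mul_pow, mul_right_comm]
      gcongr
      exact le_add_of_nonneg_left (sq_nonneg _)

lemma dirEnergy_lt_top (hs : 0 < s) (hs1 : s < 1) (hu : ContDiff ℝ (⊤ : ℕ∞) u)
    (hc : HasCompactSupport u) (v : Eu N) : dirEnergy s u v < ∞ := by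
  obtain ⟨A, hA⟩ := exists_incrementSq_le hu hc
  have hnear : IntegrableOn (fun ρ : ℝ => ρ ^ (1 - 2 * s) * (A * ‖v‖ ^ 2)) (Set.Ioc 0 1) :=
    ((intervalIntegrable_iff_integrableOn_Ioc_of_le zero_le_one).1
      (intervalIntegral.intervalIntegrable_rpow' (by linarith))).mul_const _
  have hfar : IntegrableOn (fun ρ : ℝ => ρ ^ (-(1 + 2 * s)) * A) (Set.Ioi 1) :=
    (integrableOn_Ioi_rpow_of_lt (by linarith) one_pos).mul_const _
  rw [dirEnergy, ← Set.Ioc_union_Ioi_eq_Ioi zero_le_one,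
    lintegral_union measurableSet_Ioi (Set.Ioc_disjoint_Ioi le_rfl)]
  refine ENNReal.add_lt_top.2 ⟨lt_of_le_of_lt ?_ hnear.lintegral_lt_top,
    lt_of_le_of_lt ?_ hfar.lintegral_lt_top⟩
  · refine setLIntegral_mono' measurableSet_Ioc fun ρ hρ => ?_
    have hρ0 : 0 < ρ := hρ.1
    have hpow : ρ ^ (1 - 2 * s) = ρ ^ (-(1 + 2 * s)) * ρ ^ 2 := by
      rw [← Real.rpow_natCast, ← Real.rpow_add hρ0]
      congr 1
      push_cast
      ring
    rw [hpow, mul_assoc, ENNReal.ofReal_mul (by positivity)]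
    gcongr
    refine (hA (ρ • v)).2.trans_eq ?_
    rw [norm_smul, Real.norm_of_nonneg hρ0.le]
    congr 1
    ring
  · refine setLIntegral_mono' measurableSet_Ioi fun ρ hρ => ?_
    have hρ0 : 0 < ρ := one_pos.trans hρ
    rw [ENNReal.ofReal_mul (by positivity)]
    gcongr
    exact (hA (ρ • v)).1

end Finiteness

lemma dirSemi_eq_sqrt_dirEnergy {N : ℕ} (s : ℝ) (i : Fin N) (u : Eu N → ℝ) :
    dirSemi N s i u = √(dirEnergy s u (EuclideanSpace.single i 1)).toReal := by
  rw [dirSemi, dirEnergy]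
  congr 2
  refine setLIntegral_congr_fun measurableSet_Ioi fun ρ hρ => ?_
  have hρ0 : (0 : ℝ) < ρ := hρ
  rw [incrementSq, ← lintegral_const_mul' _ _ ENNReal.ofReal_ne_top]
  refine lintegral_congr fun x => ?_
  rw [← ENNReal.ofReal_mul (by positivity), Real.rpow_neg hρ0.le, div_eq_inv_mul]

lemma sqrt_sum_le_sum_sqrt {ι : Type*} (t : Finset ι) {f : ι → ℝ} (hf : ∀ i, 0 ≤ f i) :
    √(∑ i ∈ t, f i) ≤ ∑ i ∈ t, √(f i) := by
  refine Real.sqrt_le_iff.2 ⟨Finset.sum_nonneg fun i _ => Real.sqrt_nonneg _, ?_⟩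
  calc ∑ i ∈ t, f i = ∑ i ∈ t, √(f i) ^ 2 :=
        Finset.sum_congr rfl fun i _ => (Real.sq_sqrt (hf i)).symm
    _ ≤ _ := Finset.sum_sq_le_sq_sum_of_nonneg fun i _ => Real.sqrt_nonneg _

/-- **Proposition B.1**: equivalence of the Gagliardo seminorm and the sum of the
directional seminorms, with a constant `C = C(N) > 1` independent of `s`. -/
theorem gagliardo_equiv_directional_seminorms (N : ℕ) (hN : 1 ≤ N) :
    ∃ C : ℝ, 1 < C ∧
      ∀ s : ℝ, 0 < s → s < 1 →
      ∀ u : Eu N → ℝ, ContDiff ℝ (⊤ : ℕ∞) u → HasCompactSupport u →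
        1 / C * ∑ i : Fin N, dirSemi N s i u ≤ Real.sqrt (gagliardoSqR N s u) ∧
        Real.sqrt (gagliardoSqR N s u) ≤ C * ∑ i : Fin N, dirSemi N s i u := by
  have hb0 : volume (Metric.ball (0 : Eu N) (1 / 4)) ≠ 0 :=
    (Metric.measure_ball_pos _ _ (by norm_num)).ne'
  have hbt : volume (Metric.ball (0 : Eu N) (1 / 4)) ≠ ∞ := measure_ball_lt_top.ne
  have hBt : volume (Metric.ball (0 : Eu N) 1) ≠ ∞ := measure_ball_lt_top.ne
  set a : ℝ≥0∞ := 4 * 3 / volume (Metric.ball (0 : Eu N) (1 / 4))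
  set b : ℝ≥0∞ := 4 ^ (N + 3) * (2 ^ N * volume (Metric.ball (0 : Eu N) 1))
  have ha : a ≠ ∞ := ENNReal.div_ne_top (by finiteness) hb0
  have hb : b ≠ ∞ := by finiteness
  refine ⟨2 + N * √a.toReal + √b.toReal, ?_, fun s hs hs1 u hu hc => ?_⟩
  · have h1 : 0 ≤ N * √a.toReal := by positivity
    have h2 : 0 ≤ √b.toReal := by positivity
    linarith
  have huc := hu.continuous
  simp_rw [dirSemi_eq_sqrt_dirEnergy, gagliardoSqR]
  set D : Fin N → ℝ≥0∞ := fun i => dirEnergy s u (EuclideanSpace.single i 1)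
  have hD : ∀ i, D i ≠ ∞ := fun i => (dirEnergy_lt_top hs hs1 hu hc _).ne
  have hDsum : ∑ i, D i ≠ ∞ := ENNReal.sum_ne_top.2 fun i _ => hD i
  have hupper : gagliardoSq N s u ≤ b * ∑ i, D i := by
    refine (gagliardoSq_le_setLIntegral_unitAnnulus huc hs hs1).trans ?_
    rw [mul_assoc]
    gcongr
    exact setLIntegral_unitAnnulus_dirEnergy_le_sum huc hs
  have hG : gagliardoSq N s u ≠ ∞ := ne_top_of_le_ne_top (ENNReal.mul_ne_top hb hDsum) hupper
  have hlower : ∀ i, D i ≤ a * gagliardoSq N s u := by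
    intro i
    rw [← ENNReal.mul_div_right_comm, ENNReal.le_div_iff_mul_le (.inl hb0) (.inl hbt)]
    refine (dirEnergy_mul_volume_ball_le huc (by simp)).trans ?_
    rw [mul_assoc]
    gcongr
    exact setLIntegral_unitAnnulus_dirEnergy_le huc hs
  have hupper' : √(gagliardoSq N s u).toReal ≤ √b.toReal * ∑ i, √(D i).toReal := by
    refine (Real.sqrt_le_sqrt (ENNReal.toReal_mono (ENNReal.mul_ne_top hb hDsum) hupper)).trans ?_
    rw [ENNReal.toReal_mul, Real.sqrt_mul ENNReal.toReal_nonneg, ENNReal.toReal_sum fun i _ => hD i]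
    gcongr
    exact sqrt_sum_le_sum_sqrt _ fun i => ENNReal.toReal_nonneg
  have hlower' : ∑ i, √(D i).toReal ≤ N * √a.toReal * √(gagliardoSq N s u).toReal := by
    have := Finset.sum_le_card_nsmul Finset.univ (fun i => √(D i).toReal)
      (√a.toReal * √(gagliardoSq N s u).toReal) fun i _ => by
        rw [← Real.sqrt_mul ENNReal.toReal_nonneg, ← ENNReal.toReal_mul]
        exact Real.sqrt_le_sqrt (ENNReal.toReal_mono (ENNReal.mul_ne_top ha hG) (hlower i))
    simpa [mul_assoc] using this
  have hS : 0 ≤ ∑ i, √(D i).toReal := Finset.sum_nonneg fun i _ => Real.sqrt_nonneg _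
  constructor
  · rw [one_div, inv_mul_le_iff₀ (by positivity)]
    refine hlower'.trans ?_
    gcongr
    linarith [Real.sqrt_nonneg b.toReal]
  · refine hupper'.trans ?_
    gcongr
    exact le_add_of_nonneg_left (by positivity)
end
end
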